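/- arXiv:1608.08155 — 5 statements merged into one kernel-verified Lean document; each statement's English description precedes it below -/
import Mathlib

section
/- Let (R, m) be a Noetherian local ring such that R/U_R(0) is Cohen-Macaulay. Let x = x_1, ..., x_t be a system of parameters of R (t = dim R) and y = y_1, ..., y_t a sequence of elements of R with (y) ⊆^A (x) for some t×t matrix A over R. Then the image of y is a system of parameters of R/U_R(0) if and only if the determinantal map det(A): R/(x)^lim → R/(y)^lim is injective. -/
/-!
Limit closures of sequences of length `t` are unchanged by passing to the quotient by an ideal of
dimension less than `t`, since the limit closure of a sequence that is longer than the dimension of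
the ring is the whole ring. This reduces the theorem to a Cohen–Macaulay ring, in which every
parameter ideal is its own limit closure.

If `y` is a system of parameters, then some powers of the `x i` lie in `(y)`, and the determinantal
map followed by the one to those powers is multiplication by a power of `x₁⋯x_t`, which is
injective.

If `y` is not a system of parameters, it lies in a nonmaximal prime `p`. Injectivity for `x` and `y`
persists on replacing `x` and `y` by powers. There are a system of parameters `u` and a sequence `w`
in `(u)` generating `p` up to radical for which `R/(u) → R/(w)^lim` is not injective. High powers of
the `y i` are combinations both of `w` and of high powers of `x`, and the latter are combinations
of `u`. As determinantal maps do not depend on the matrix, those from `u` through `w` and through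
powers of `x` coincide; the second is injective and the first is not.
-/

open IsLocalRing

/-- The limit closure `(x)^lim = ⋃_{n>0} ((x₁^{n+1}, …, x_r^{n+1}) :_R (x₁⋯x_r)^n)` of a
sequence `x = x₁, …, x_r` of elements of `R`; the union of the increasing family of ideals
is expressed as a supremum. -/
def limitClosure {R : Type*} [CommRing R] {M : Type*} [AddCommGroup M] [Module R M]
    {r : ℕ} (x : Fin r → R) : Submodule R M :=
  ⨆ n : ℕ, (Ideal.span (Set.range fun i => x i ^ (n + 2)) • (⊤ : Submodule R M)).comap
    (LinearMap.lsmul R M ((∏ i, x i) ^ (n + 1)))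

/-- The dimension of a module `M`: the Krull dimension of `R ⧸ Ann M`. -/
noncomputable def moduleDim (R M : Type*) [CommRing R] [AddCommGroup M] [Module R M] :
    WithBot ℕ∞ :=
  ringKrullDim (R ⧸ Module.annihilator R M)

/-- A system of parameters of a Noetherian local ring `R` of dimension `t`: a sequence of `t`
elements of the maximal ideal generating an ideal primary to the maximal ideal. -/
def IsSOP (R : Type*) [CommRing R] [IsLocalRing R] {t : ℕ} (x : Fin t → R) : Prop :=
  (∀ i, x i ∈ maximalIdeal R) ∧ (Ideal.span (Set.range x)).radical = maximalIdeal R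

/-- A (Noetherian, local) ring is Cohen–Macaulay if it admits a regular sequence whose length
equals its Krull dimension. -/
def IsCohenMacaulayRing (A : Type*) [CommRing A] : Prop :=
  ∃ rs : List A, RingTheory.Sequence.IsRegular A rs ∧
    (rs.length : WithBot ℕ∞) = ringKrullDim A

/-! ### Limit closures and determinantal maps -/

section LimitClosure

variable {R : Type*} [CommRing R] {t : ℕ} {x y : Fin t → R} {a c : R} {I : Ideal R}

theorem mul_mem_of_mem_span {s : Set R} (hc : ∀ b ∈ s, c * b ∈ I) (ha : a ∈ Ideal.span s) :
    c * a ∈ I :=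
  (Submodule.span_le.2 hc : Ideal.span s ≤ Submodule.comap (LinearMap.lsmul R R c) I) ha

theorem mem_span_range (x : Fin t → R) (i : Fin t) : x i ∈ Ideal.span (Set.range x) :=
  Ideal.subset_span ⟨i, rfl⟩

theorem prod_pow_mul_mem_span_pow {k m : ℕ} (ha : a ∈ Ideal.span (Set.range fun i => x i ^ m)) :
    (∏ i, x i) ^ k * a ∈ Ideal.span (Set.range fun i => x i ^ (k + m)) := by
  refine mul_mem_of_mem_span ?_ ha
  rintro _ ⟨i, rfl⟩
  refine Ideal.mem_of_dvd _ ?_ (mem_span_range (fun i => x i ^ (k + m)) i)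
  dsimp only
  rw [pow_add]
  exact mul_dvd_mul_right (pow_dvd_pow_of_dvd (Finset.dvd_prod_of_mem _ (Finset.mem_univ i)) k) _

theorem prod_pow_mul_mem_span_of_le {n m : ℕ} (hnm : n ≤ m)
    (h : (∏ i, x i) ^ n * a ∈ Ideal.span (Set.range fun i => x i ^ (n + 1))) :
    (∏ i, x i) ^ m * a ∈ Ideal.span (Set.range fun i => x i ^ (m + 1)) := by
  obtain ⟨k, rfl⟩ := Nat.exists_eq_add_of_le' hnm
  rw [pow_add, mul_assoc, add_assoc]
  exact prod_pow_mul_mem_span_pow h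

theorem mem_limitClosure_iff :
    a ∈ limitClosure (M := R) x ↔
      ∃ n, (∏ i, x i) ^ n * a ∈ Ideal.span (Set.range fun i => x i ^ (n + 1)) := by
  have hstage (n : ℕ) (b : R) :
      b ∈ (Ideal.span (Set.range fun i => x i ^ (n + 2)) • (⊤ : Submodule R R)).comap
        (LinearMap.lsmul R R ((∏ i, x i) ^ (n + 1))) ↔
      (∏ i, x i) ^ (n + 1) * b ∈ Ideal.span (Set.range fun i => x i ^ (n + 1 + 1)) := by
    simp
  rw [limitClosure, Submodule.mem_iSup_of_directed]
  · simp only [hstage]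
    exact ⟨fun ⟨n, hn⟩ => ⟨n + 1, hn⟩,
      fun ⟨n, hn⟩ => ⟨n, prod_pow_mul_mem_span_of_le n.le_succ hn⟩⟩
  · refine Monotone.directed_le fun n m hnm b hb => ?_
    rw [hstage] at hb ⊢
    exact prod_pow_mul_mem_span_of_le (Nat.succ_le_succ hnm) hb

theorem span_le_limitClosure (x : Fin t → R) :
    Ideal.span (Set.range x) ≤ limitClosure (M := R) x := fun a ha =>
  mem_limitClosure_iff.2 ⟨0, by simpa using ha⟩

theorem mem_limitClosure_of_prod_pow_mul_mem {k : ℕ}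
    (h : (∏ i, x i) ^ k * a ∈ limitClosure (M := R) fun i => x i ^ (k + 1)) :
    a ∈ limitClosure (M := R) x := by
  obtain ⟨n, hn⟩ := mem_limitClosure_iff.1 h
  refine mem_limitClosure_iff.2 ⟨(k + 1) * n + k, ?_⟩
  simp_rw [Finset.prod_pow, ← pow_mul] at hn
  rwa [pow_add, mul_assoc]

theorem exists_mulVec_eq (h : ∀ i, y i ∈ Ideal.span (Set.range x)) :
    ∃ A : Matrix (Fin t) (Fin t) R, A.mulVec x = y := by
  choose A hA using fun i => Ideal.mem_span_range_iff_exists_fun.1 (h i)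
  exact ⟨A, funext hA⟩

theorem mulVec_mem_span (A : Matrix (Fin t) (Fin t) R) (x : Fin t → R) (i : Fin t) :
    A.mulVec x i ∈ Ideal.span (Set.range x) :=
  Ideal.mem_span_range_iff_exists_fun.2 ⟨A i, rfl⟩

theorem det_mul_mem (A : Matrix (Fin t) (Fin t) R) (h : ∀ i, A.mulVec x i ∈ I)
    (ha : a ∈ Ideal.span (Set.range x)) : A.det * a ∈ I := by
  refine mul_mem_of_mem_span ?_ ha
  rintro _ ⟨j, rfl⟩
  have hcramer : A.det * x j = A.adjugate.mulVec (A.mulVec x) j := by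
    rw [Matrix.mulVec_mulVec, Matrix.adjugate_mul, Matrix.smul_mulVec, Matrix.one_mulVec,
      Pi.smul_apply, smul_eq_mul]
  rw [hcramer]
  exact Ideal.span_le.2 (Set.range_subset_iff.2 h) (mulVec_mem_span A.adjugate (A.mulVec x) j)

/-- Scaling the rows other than `k` by the `y i` and applying Cramer's rule gives
`y₁⋯y_t · det D ∈ (y₁², …, y_t²)`. -/
theorem det_mem_limitClosure_of_mulVec_eq_update_zero (k : Fin t)
    (hy : y k ∈ Ideal.span (Set.range x)) {D : Matrix (Fin t) (Fin t) R}
    (hD : D.mulVec x = Function.update y k 0) : D.det ∈ limitClosure (M := R) y := by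
  have hrows (i : Fin t) : (Matrix.diagonal (Function.update y k 1) * D).mulVec x i ∈
      Ideal.span (Set.range fun i => y i ^ 2) := by
    rw [← Matrix.mulVec_mulVec, Matrix.mulVec_diagonal, hD]
    obtain rfl | hi := eq_or_ne i k
    · simp
    · rw [Function.update_of_ne hi, Function.update_of_ne hi, ← sq]
      exact mem_span_range (fun i => y i ^ 2) i
  have hdet := det_mul_mem _ hrows hy
  rw [Matrix.det_mul, Matrix.det_diagonal, Finset.prod_update_of_mem (Finset.mem_univ k),
    one_mul] at hdet
  refine mem_limitClosure_iff.2 ⟨1, ?_⟩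
  rw [pow_one, Finset.prod_eq_mul_prod_sdiff_singleton_of_mem (Finset.mem_univ k)]
  convert hdet using 1
  ring

/-- The rows of one matrix are exchanged one at a time for those of the other. -/
theorem det_sub_det_mem_limitClosure {A B : Matrix (Fin t) (Fin t) R} (hA : A.mulVec x = y)
    (hB : B.mulVec x = y) : A.det - B.det ∈ limitClosure (M := R) y := by
  let P (s : Finset (Fin t)) : Matrix (Fin t) (Fin t) R := Matrix.of (s.piecewise B.row A.row)
  have hP (s : Finset (Fin t)) : (P s).mulVec x = y := by
    funext i
    by_cases hi : i ∈ s
    · simp [P, Matrix.mulVec, hi, ← hB]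
    · simp [P, Matrix.mulVec, hi, ← hA]
  suffices ∀ s, A.det - (P s).det ∈ limitClosure (M := R) y by
    have huniv : P Finset.univ = B := Finset.piecewise_univ ..
    exact huniv ▸ this Finset.univ
  intro s
  induction s using Finset.induction_on with
  | empty =>
    have hempty : P ∅ = A := Finset.piecewise_empty B.row A.row
    simp [hempty]
  | insert k s hk ih =>
    have hinsert : P (insert k s) = (P s).updateRow k (B k) := Finset.piecewise_insert ..
    have hrow : P s k = A k := Finset.piecewise_eq_of_notMem s B.row A.row hk
    have hsub : (P s).det - (P (insert k s)).det =
        ((P s).updateRow k (A k - B k)).det := by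
      have hadd := Matrix.det_updateRow_add (P s) k (A k - B k) (B k)
      rw [sub_add_cancel, ← hrow, Matrix.updateRow_eq_self, ← hinsert] at hadd
      rw [hadd, add_sub_cancel_right, hrow]
    have hzero : ((P s).updateRow k (A k - B k)).mulVec x = Function.update y k 0 := by
      rw [Matrix.updateRow_mulVec, hP, sub_dotProduct]
      exact congrArg _ (sub_eq_zero.2 (congrFun (hA.trans hB.symm) k))
    rw [← sub_add_sub_cancel _ (P s).det, hsub]
    exact add_mem ih (det_mem_limitClosure_of_mulVec_eq_update_zero k
      (hA ▸ mulVec_mem_span A x k) hzero)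

theorem mulVec_diagonal_pow (x : Fin t → R) (k l : ℕ) :
    (Matrix.diagonal fun i => x i ^ k).mulVec (fun i => x i ^ l) = fun i => x i ^ (k + l) :=
  funext fun i => by rw [Matrix.mulVec_diagonal, pow_add]

theorem exists_pow_mem (h : ∀ i, y i ∈ I.radical) : ∃ N, ∀ i, y i ^ (N + 1) ∈ I := by
  choose n hn using h
  refine ⟨∑ i, n i, fun i => I.mem_of_dvd (pow_dvd_pow _ ?_) (hn i)⟩
  exact (Finset.single_le_sum (fun i _ => Nat.zero_le (n i)) (Finset.mem_univ i)).trans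
    (Nat.le_succ _)

theorem span_le_radical_span_pow (x : Fin t → R) (k : ℕ) :
    Ideal.span (Set.range x) ≤ (Ideal.span (Set.range fun i => x i ^ k)).radical :=
  Ideal.span_le.2 (Set.range_subset_iff.2 fun i => ⟨k, mem_span_range (fun i => x i ^ k) i⟩)

/-- For large `N` the determinantal map to the sequence of the `y i ^ (N + 1)` also factors through
the sequence of the `x i ^ (n + 1)`. -/
theorem det_mul_mem_limitClosure {A : Matrix (Fin t) (Fin t) R} (hA : A.mulVec x = y)
    (ha : a ∈ limitClosure (M := R) x) : A.det * a ∈ limitClosure (M := R) y := by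
  obtain ⟨n, hn⟩ := mem_limitClosure_iff.1 ha
  obtain ⟨N, hN⟩ := exists_pow_mem (I := Ideal.span (Set.range fun i => x i ^ (n + 1)))
    fun i => span_le_radical_span_pow x _ (hA ▸ mulVec_mem_span A x i)
  obtain ⟨B, hB⟩ := exists_mulVec_eq hN
  refine mem_limitClosure_of_prod_pow_mul_mem (k := N) ?_
  have hindep := det_sub_det_mem_limitClosure
    (A := Matrix.diagonal (fun i => y i ^ N) * A) (B := B * Matrix.diagonal (fun i => x i ^ n))
    (x := x) (y := fun i => y i ^ (N + 1))
    (by rw [← Matrix.mulVec_mulVec, hA]; simpa using mulVec_diagonal_pow y N 1)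
    (by rw [← Matrix.mulVec_mulVec, ← hB]; congr 1; simpa using mulVec_diagonal_pow x n 1)
  have hB_mem := span_le_limitClosure _
    (det_mul_mem B (mem_span_range _) hn)
  simp only [Matrix.det_mul, Matrix.det_diagonal, Finset.prod_pow, hB] at hindep hB_mem
  convert add_mem (Ideal.mul_mem_left _ a hindep) hB_mem using 1
  ring

/-- Followed by the determinantal map to `R/(x₁ᴺ⁺¹, …)^lim` for suitable `N`, the map becomes
multiplication by `(x₁⋯x_t)ᴺ`. -/
theorem mem_limitClosure_of_det_mul_mem {A : Matrix (Fin t) (Fin t) R} (hA : A.mulVec x = y)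
    (hxy : ∀ i, x i ∈ (Ideal.span (Set.range y)).radical)
    (ha : A.det * a ∈ limitClosure (M := R) y) : a ∈ limitClosure (M := R) x := by
  obtain ⟨N, hN⟩ := exists_pow_mem hxy
  obtain ⟨D, hD⟩ := exists_mulVec_eq hN
  refine mem_limitClosure_of_prod_pow_mul_mem (k := N) ?_
  have hindep := det_sub_det_mem_limitClosure
    (A := Matrix.diagonal (fun i => x i ^ N)) (B := D * A)
    (x := x) (y := fun i => x i ^ (N + 1))
    (by simpa using mulVec_diagonal_pow x N 1)
    (by rw [← Matrix.mulVec_mulVec, hA, hD])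
  simp only [Matrix.det_mul, Matrix.det_diagonal, Finset.prod_pow] at hindep
  convert add_mem (Ideal.mul_mem_left _ a hindep) (det_mul_mem_limitClosure hD ha) using 1
  ring

end LimitClosure

/-! ### Ideals of small dimension -/

/-- The multiplicative set `{yᵏ (1 + a y)}`. The primes disjoint from it are those which do not
contain `y` and lie below a prime containing `y`, so inverting it lowers the Krull dimension. -/
def boundaryMonoid {B : Type*} [CommRing B] (y : B) : Submonoid B where
  carrier := {s | ∃ (k : ℕ) (a : B), s = y ^ k * (1 + a * y)}
  one_mem' := ⟨0, 0, by simp⟩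
  mul_mem' := by
    rintro _ _ ⟨k, a, rfl⟩ ⟨l, b, rfl⟩
    exact ⟨k + l, a + b + a * b * y, by ring⟩

theorem exists_lt_of_disjoint_boundaryMonoid {B : Type*} [CommRing B] {y : B}
    (p : PrimeSpectrum B) (hp : Disjoint (boundaryMonoid y : Set B) p.asIdeal) : ∃ q, p < q := by
  have hne : p.asIdeal ⊔ Ideal.span {y} ≠ ⊤ := by
    intro htop
    obtain ⟨s, hs, q, hq, hsq⟩ := Submodule.mem_sup.1 ((Ideal.eq_top_iff_one _).1 htop)
    obtain ⟨c, rfl⟩ := Ideal.mem_span_singleton'.1 hq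
    exact hp.notMem_of_mem_left ⟨0, -c, by linear_combination hsq⟩ hs
  obtain ⟨m, hm, hle⟩ := Ideal.exists_le_maximal _ hne
  refine ⟨⟨m, hm.isPrime⟩, lt_of_le_not_ge (le_sup_left.trans hle) fun hmp => ?_⟩
  exact hp.notMem_of_mem_left ⟨1, 0, by simp⟩
    (hmp (hle (Ideal.mem_sup_right (Ideal.mem_span_singleton_self y))))

theorem ringKrullDim_localization_boundaryMonoid_lt {B : Type*} [CommRing B] (y : B) {t : ℕ}
    (h : ringKrullDim B < (t + 1 : ℕ)) :
    ringKrullDim (Localization (boundaryMonoid y)) < t := by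
  contrapose! h
  obtain ⟨l, hl⟩ := Order.le_krullDim_iff.1 h
  let f := PrimeSpectrum.comap (algebraMap B (Localization (boundaryMonoid y)))
  have hf : StrictMono f := Monotone.strictMono_of_injective (fun _ _ h => Ideal.comap_mono h)
    (PrimeSpectrum.localization_comap_injective _ (boundaryMonoid y))
  obtain ⟨q, hq⟩ := exists_lt_of_disjoint_boundaryMonoid (l.map f hf).last
    ((IsLocalization.disjoint_under_iff (boundaryMonoid y) _ _).2 l.last.isPrime.ne_top)
  exact Order.le_krullDim_iff.2 ⟨(l.map f hf).snoc q hq, by simp [hl]⟩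

theorem one_mem_limitClosure_of_localization {B : Type*} [CommRing B] {t : ℕ} (y : Fin (t + 1) → B)
    (h : 1 ∈ limitClosure (M := Localization (boundaryMonoid (y 0)))
      fun i : Fin t => algebraMap B (Localization (boundaryMonoid (y 0))) (y i.succ)) :
    1 ∈ limitClosure (M := B) y := by
  let z : Fin t → B := fun i => y i.succ
  obtain ⟨n, hn⟩ := mem_limitClosure_iff.1 h
  obtain ⟨k, a, hs⟩ : ∃ k a, y 0 ^ k * (1 + a * y 0) * (∏ i, z i) ^ n ∈
      Ideal.span (Set.range fun i => z i ^ (n + 1)) := by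
    have hmap : algebraMap B (Localization (boundaryMonoid (y 0))) ((∏ i, z i) ^ n) ∈
        (Ideal.span (Set.range fun i => z i ^ (n + 1))).map (algebraMap B _) := by
      rw [Ideal.map_span, ← Set.range_comp]
      simpa [Function.comp_def] using hn
    rw [IsLocalization.algebraMap_mem_map_algebraMap_iff (boundaryMonoid (y 0))] at hmap
    obtain ⟨_, ⟨k, a, rfl⟩, hs⟩ := hmap
    exact ⟨k, a, hs⟩
  refine mem_limitClosure_iff.2 ⟨k + n, ?_⟩
  set I := Ideal.span (Set.range fun i => y i ^ (k + n + 1))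
  have htail : (∏ i, z i) ^ k * (y 0 ^ k * (1 + a * y 0) * (∏ i, z i) ^ n) ∈ I := by
    refine Ideal.span_mono ?_ (prod_pow_mul_mem_span_pow hs)
    rintro _ ⟨i, rfl⟩
    exact ⟨i.succ, rfl⟩
  have hhead : y 0 ^ (k + n + 1) ∈ I := mem_span_range (fun i => y i ^ (k + n + 1)) 0
  -- the term with coefficient `a` is a multiple of `y₀ᵏ⁺ⁿ⁺¹`
  have := sub_mem (I.mul_mem_left (y 0 ^ n) htail)
    (I.mul_mem_left (a * (∏ i, z i) ^ (k + n)) hhead)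
  rw [Fin.prod_univ_succ]
  convert this using 1
  ring

/-- An elementary form of the vanishing of the top local cohomology `H^t_{(y)}(B)`. -/
theorem one_mem_limitClosure_of_ringKrullDim_lt {B : Type*} [CommRing B] {t : ℕ}
    (h : ringKrullDim B < t) (y : Fin t → B) : 1 ∈ limitClosure (M := B) y := by
  induction t generalizing B with
  | zero =>
    have : Subsingleton B := not_nontrivial_iff_subsingleton.1 fun _ =>
      h.not_ge ringKrullDim_nonneg_of_nontrivial
    rw [Subsingleton.elim (1 : B) 0]
    exact zero_mem _
  | succ t ih =>
    exact one_mem_limitClosure_of_localization y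
      (ih (ringKrullDim_localization_boundaryMonoid_lt (y 0) h) _)

section Quotient

variable {R : Type*} [CommRing R] {t : ℕ} {U : Ideal R}

theorem mk_mem_span_range_mk_iff {z : Fin t → R} {a : R} :
    Ideal.Quotient.mk U a ∈ Ideal.span (Set.range fun i => Ideal.Quotient.mk U (z i)) ↔
      a ∈ Ideal.span (Set.range z) ⊔ U := by
  rw [← Ideal.mem_quotient_iff_mem_sup, Ideal.map_span, ← Set.range_comp]
  rfl

theorem mk_mem_limitClosure_iff {y : Fin t → R} {a : R} :
    Ideal.Quotient.mk U a ∈ limitClosure (M := R ⧸ U) (fun i => Ideal.Quotient.mk U (y i)) ↔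
      ∃ n, (∏ i, y i) ^ n * a ∈ Ideal.span (Set.range fun i => y i ^ (n + 1)) ⊔ U := by
  simp_rw [mem_limitClosure_iff, ← map_prod, ← map_pow, ← map_mul, mk_mem_span_range_mk_iff]

theorem le_limitClosure_of_moduleDim_lt (hU : moduleDim R U < t) (y : Fin t → R) :
    U ≤ limitClosure (M := R) y := by
  intro u hu
  obtain ⟨n, hn⟩ := mk_mem_limitClosure_iff.1
    (one_mem_limitClosure_of_ringKrullDim_lt hU fun i => Ideal.Quotient.mk _ (y i))
  obtain ⟨c, hc, v, hv, hcv⟩ := Submodule.mem_sup.1 hn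
  have hvu : v * u = 0 := congrArg Subtype.val (Module.mem_annihilator.1 hv ⟨u, hu⟩)
  refine mem_limitClosure_iff.2 ⟨n, ?_⟩
  rw [show (∏ i, y i) ^ n * u = u * c by linear_combination hvu - u * hcv]
  exact Ideal.mul_mem_left _ u hc

theorem mk_mem_limitClosure_iff_of_moduleDim_lt (hU : moduleDim R U < t) {y : Fin t → R} {a : R} :
    Ideal.Quotient.mk U a ∈ limitClosure (M := R ⧸ U) (fun i => Ideal.Quotient.mk U (y i)) ↔
      a ∈ limitClosure (M := R) y := by
  refine ⟨fun h => ?_, fun h => ?_⟩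
  · obtain ⟨n, hn⟩ := mk_mem_limitClosure_iff.1 h
    exact mem_limitClosure_of_prod_pow_mul_mem
      (sup_le (span_le_limitClosure _) (le_limitClosure_of_moduleDim_lt hU _) hn)
  · obtain ⟨n, hn⟩ := mem_limitClosure_iff.1 h
    exact mk_mem_limitClosure_iff.2 ⟨n, Ideal.mem_sup_left hn⟩

theorem length_le_ringKrullDim_quotient (l : LTSeries (PrimeSpectrum R))
    (h : U ≤ l.head.asIdeal) : (l.length : WithBot ℕ∞) ≤ ringKrullDim (R ⧸ U) := by
  rw [ringKrullDim_quotient]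
  exact Order.le_krullDim_iff.2 ⟨
    { length := l.length
      toFun := fun i => ⟨l i, h.trans (l.head_le i)⟩
      step := l.step }, rfl⟩

/-- A prime contains `U` or its annihilator. -/
theorem ringKrullDim_quotient_eq_of_moduleDim_lt (hdim : ringKrullDim R = t)
    (hU : moduleDim R U < t) : ringKrullDim (R ⧸ U) = t := by
  refine le_antisymm (hdim ▸ ringKrullDim_quotient_le U) ?_
  obtain ⟨l, rfl⟩ := Order.le_krullDim_iff.1 hdim.ge
  have hprod : U * Module.annihilator R U ≤ l.head.asIdeal := by
    rw [← Submodule.annihilator, mul_comm, ← smul_eq_mul, Submodule.annihilator_smul]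
    exact bot_le
  rcases l.head.isPrime.mul_le.1 hprod with h | h
  · exact length_le_ringKrullDim_quotient l h
  · exact absurd (length_le_ringKrullDim_quotient l h) hU.not_ge

end Quotient

/-! ### Parameters in a Cohen–Macaulay ring -/

theorem exists_mem_forall_notMem_of_finite {R : Type*} [CommRing R] (I : Ideal R)
    {F : Set (Ideal R)} (hF : F.Finite) (hprime : ∀ p ∈ F, p.IsPrime) :
    ∃ b ∈ I, ∀ p ∈ F, ¬ I ≤ p → b ∉ p := by
  by_contra! hcover
  have hsub : (I : Set R) ⊆ ⋃ p ∈ {p ∈ F | ¬ I ≤ p}, (p : Set R) := fun b hb => by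
    obtain ⟨p, hp, hIp, hbp⟩ := hcover b hb
    exact Set.mem_biUnion ⟨hp, hIp⟩ hbp
  obtain ⟨p, hp, hIp⟩ := (Ideal.subset_union_prime_finite (f := id) (hF.subset fun p hp => hp.1)
    ⊤ ⊤ fun p hp _ _ => hprime p hp.1).1 hsub
  exact hp.2 hIp

section LocalRing

variable {S : Type*} [CommRing S] [IsLocalRing S] {t : ℕ} {x y : Fin t → S}

theorem isSOP_iff_maximalIdeal_le_radical :
    IsSOP S x ↔ (∀ i, x i ∈ maximalIdeal S) ∧
      maximalIdeal S ≤ (Ideal.span (Set.range x)).radical := by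
  refine and_congr_right fun hx => ⟨fun h => h.ge, fun h => h.antisymm' ?_⟩
  exact ((maximalIdeal.isMaximal S).isPrime.radical_le_iff).2
    (Ideal.span_le.2 (Set.range_subset_iff.2 hx))

theorem IsSOP.of_mem_radical (hx : IsSOP S x) (hy : ∀ i, y i ∈ maximalIdeal S)
    (hxy : ∀ i, x i ∈ (Ideal.span (Set.range y)).radical) : IsSOP S y :=
  isSOP_iff_maximalIdeal_le_radical.2 ⟨hy, hx.2 ▸
    Ideal.radical_le_radical_iff.2 (Ideal.span_le.2 (Set.range_subset_iff.2 hxy))⟩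

theorem IsSOP.of_eq_pow (hx : IsSOP S x) (hy : ∀ i, ∃ n, y i = x i ^ (n + 1)) : IsSOP S y := by
  choose n hn using hy
  refine hx.of_mem_radical (fun i => ?_) fun i => ⟨n i + 1, hn i ▸ mem_span_range y i⟩
  exact hn i ▸ Ideal.pow_mem_of_mem _ (hx.1 i) _ (Nat.succ_pos _)

variable [IsNoetherianRing S]

/-- By Krull's principal ideal theorem no prime lies strictly between a minimal prime of `J` and
the maximal ideal. -/
theorem maximalIdeal_le_radical_sup_span_singleton {J : Ideal S} {r b : S}
    (hr : r ∈ maximalIdeal S) (hJ : maximalIdeal S ≤ (J ⊔ Ideal.span {r}).radical)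
    (hb : ∀ p ∈ J.minimalPrimes, ¬ maximalIdeal S ≤ p → b ∉ p) :
    maximalIdeal S ≤ (J ⊔ Ideal.span {b}).radical := by
  rw [Ideal.radical_eq_sInf, le_sInf_iff]
  rintro Q ⟨hQ, hQp⟩
  by_contra hmQ
  have hJQ : J ≤ Q := le_sup_left.trans hQ
  have hQm : Q < maximalIdeal S := (le_maximalIdeal hQp.ne_top).lt_of_not_ge hmQ
  have hmin : maximalIdeal S ∈ (Ideal.span (insert r (J : Set S))).minimalPrimes := by
    rw [Ideal.span_insert, Ideal.span_eq, sup_comm]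
    refine ⟨⟨inferInstance, sup_le (hJQ.trans hQm.le) ?_⟩, fun q hq _ => ?_⟩
    · rwa [Ideal.span_singleton_le_iff_mem]
    · exact hJ.trans (hq.1.radical_le_iff.2 hq.2)
  have hQmin := Ideal.mem_minimalPrimes_span_of_mem_minimalPrimes_span_insert hQm r J hmin J hJQ
    fun a ha => Ideal.le_radical (Ideal.subset_span (Set.mem_insert_of_mem r ha))
  rw [Ideal.span_eq] at hQmin
  exact hb Q hQmin hmQ (hQ (Ideal.mem_sup_right (Ideal.mem_span_singleton_self b)))

theorem exists_maximalIdeal_le_radical_sup_span_singleton {J K : Ideal S} {r s : S}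
    (hr : r ∈ maximalIdeal S) (hs : s ∈ maximalIdeal S)
    (hJ : maximalIdeal S ≤ (J ⊔ Ideal.span {r}).radical)
    (hK : maximalIdeal S ≤ (K ⊔ Ideal.span {s}).radical) :
    ∃ b ∈ maximalIdeal S, maximalIdeal S ≤ (J ⊔ Ideal.span {b}).radical ∧
      maximalIdeal S ≤ (K ⊔ Ideal.span {b}).radical := by
  obtain ⟨b, hb, hbJK⟩ := exists_mem_forall_notMem_of_finite (maximalIdeal S)
    (J.finite_minimalPrimes_of_isNoetherianRing.union K.finite_minimalPrimes_of_isNoetherianRing)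
    fun p hp => hp.elim (fun h => h.isPrime) fun h => h.isPrime
  exact ⟨b, hb, maximalIdeal_le_radical_sup_span_singleton hr hJ fun p hp => hbJK p (.inl hp),
    maximalIdeal_le_radical_sup_span_singleton hs hK fun p hp => hbJK p (.inr hp)⟩

end LocalRing

theorem isSMulRegular_of_mem_radical {R N : Type*} [CommRing R] [AddCommGroup N] [Module R N]
    {J : Ideal R} (hJ : J ≤ Module.annihilator R N) {r b : R}
    (hr : r ∈ (J ⊔ Ideal.span {b}).radical) (h : IsSMulRegular N r) : IsSMulRegular N b := by
  rw [isSMulRegular_iff_right_eq_zero_of_smul]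
  intro v hv
  obtain ⟨n, hn⟩ := hr
  obtain ⟨a, ha, c, hc, hac⟩ := Submodule.mem_sup.1 hn
  obtain ⟨d, rfl⟩ := Ideal.mem_span_singleton'.1 hc
  refine isSMulRegular_iff_right_eq_zero_of_smul.1 (h.pow n) v ?_
  rw [← hac, add_smul, Module.mem_annihilator.1 (hJ ha), mul_smul, hv, smul_zero, add_zero]

section Exchange

open RingTheory.Sequence

variable {S M : Type*} [CommRing S] [IsNoetherianRing S] [IsLocalRing S] [AddCommGroup M]
  [Module S M] [Module.Finite S M] {I : Ideal S}

/-- `c` is moved to the end of the sequence, replaced there by `d`, and moved back. -/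
theorem isWeaklyRegular_cons_of_mem_radical (hI : I ≤ Module.annihilator S M) {l : List S}
    {c d : S} (hl : ∀ s ∈ l, s ∈ maximalIdeal S) (hc : c ∈ maximalIdeal S)
    (hd : d ∈ maximalIdeal S) (hcd : c ∈ (I ⊔ Ideal.ofList l ⊔ Ideal.span {d}).radical)
    (hreg : IsWeaklyRegular M (c :: l)) : IsWeaklyRegular M (d :: l) := by
  have : IsNoetherian S M := isNoetherian_of_isNoetherianRing_of_finite S M
  have hlc : IsWeaklyRegular M (l ++ [c]) := isWeaklyRegular_of_perm_of_subset_maximalIdeal hreg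
    (List.perm_append_singleton c l).symm (List.forall_mem_cons.2 ⟨hc, hl⟩)
  have hann : I ⊔ Ideal.ofList l ≤
      Module.annihilator S (M ⧸ (Ideal.ofList l • ⊤ : Submodule S M)) := by
    refine sup_le (hI.trans (LinearMap.annihilator_le_of_surjective (Submodule.mkQ _)
      (Submodule.mkQ_surjective _))) fun a ha => Module.mem_annihilator.2 fun v => ?_
    obtain ⟨v, rfl⟩ := Submodule.mkQ_surjective _ v
    rw [← map_smul, Submodule.mkQ_apply, Submodule.Quotient.mk_eq_zero]
    exact Submodule.smul_mem_smul ha trivial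
  have hld : IsWeaklyRegular M (l ++ [d]) := by
    rw [isWeaklyRegular_append_iff, isWeaklyRegular_singleton_iff] at hlc ⊢
    exact ⟨hlc.1, isSMulRegular_of_mem_radical hann hcd hlc.2⟩
  refine isWeaklyRegular_of_perm_of_subset_maximalIdeal hld (List.perm_append_singleton d l) ?_
  simpa [or_imp, forall_and] using ⟨hl, hd⟩

/-- An element `b` is chosen which may replace the first member of both sequences; the exchange
preserves regularity in both directions, and one passes to `M/bM`. -/
theorem isWeaklyRegular_of_maximalIdeal_le_radical {rs xs : List S}
    (hI : I ≤ Module.annihilator S M) (hlen : rs.length = xs.length)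
    (hrm : ∀ r ∈ rs, r ∈ maximalIdeal S) (hxm : ∀ x ∈ xs, x ∈ maximalIdeal S)
    (hr : maximalIdeal S ≤ (I ⊔ Ideal.ofList rs).radical)
    (hx : maximalIdeal S ≤ (I ⊔ Ideal.ofList xs).radical) (hreg : IsWeaklyRegular M rs) :
    IsWeaklyRegular M xs := by
  induction rs generalizing M xs I with
  | nil =>
    obtain rfl : xs = [] := List.length_eq_zero_iff.1 hlen.symm
    exact IsWeaklyRegular.nil S M
  | cons r rs ih =>
    obtain _ | ⟨x, xs⟩ := xs
    · simp at hlen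
    rw [List.forall_mem_cons] at hrm hxm
    rw [Ideal.ofList_cons, sup_comm (Ideal.span _), ← sup_assoc] at hr hx
    obtain ⟨b, hbm, hrb, hxb⟩ :=
      exists_maximalIdeal_le_radical_sup_span_singleton hrm.1 hxm.1 hr hx
    have hbrs : IsWeaklyRegular M (b :: rs) :=
      isWeaklyRegular_cons_of_mem_radical hI hrm.2 hrm.1 hbm (hrb hrm.1) hreg
    rw [isWeaklyRegular_cons_iff] at hbrs
    have hann : I ⊔ Ideal.span {b} ≤ Module.annihilator S (QuotSMulTop b M) :=
      sup_le (hI.trans (LinearMap.annihilator_le_of_surjective _ (Submodule.mkQ_surjective _)))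
        ((Ideal.span_singleton_le_iff_mem _).2 (QuotSMulTop.mem_annihilator M b))
    have hxs : IsWeaklyRegular (QuotSMulTop b M) xs :=
      ih hann (Nat.succ.inj hlen) hrm.2 hxm.2 (by rwa [sup_right_comm]) (by rwa [sup_right_comm])
        hbrs.2
    exact isWeaklyRegular_cons_of_mem_radical hI hxm.2 hbm hxm.1 (hx hbm)
      ((isWeaklyRegular_cons_iff ..).2 ⟨hbrs.1, hxs⟩)

end Exchange

section CohenMacaulay

open RingTheory.Sequence

variable {S : Type*} [CommRing S] [IsLocalRing S] {t : ℕ} {x : Fin t → S}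

theorem maximalIdeal_le_radical_of_ringKrullDim_quotient_le_zero {I : Ideal S}
    (h : ringKrullDim (S ⧸ I) ≤ 0) : maximalIdeal S ≤ I.radical := by
  rw [Ideal.radical_eq_sInf, le_sInf_iff]
  rintro Q ⟨hIQ, hQ⟩
  have : Ring.KrullDimLE 0 (S ⧸ I) := Ring.krullDimLE_iff.2 h
  have hQ' : (Q.map (Ideal.Quotient.mk I)).IsPrime := Ideal.isPrime_map_quotientMk_of_isPrime hIQ
  have := hQ'.isMaximal'
  rw [← Ideal.comap_map_mk hIQ]
  exact (eq_maximalIdeal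
    (Ideal.comap_isMaximal_of_surjective _ Ideal.Quotient.mk_surjective)).ge

theorem mem_maximalIdeal_of_isRegular {rs : List S} (hrs : IsRegular S rs) {r : S}
    (hr : r ∈ rs) : r ∈ maximalIdeal S := by
  refine le_maximalIdeal (J := Ideal.ofList rs) (fun h => hrs.2 ?_) (Ideal.subset_span hr)
  rw [h, Submodule.top_smul]

theorem maximalIdeal_le_radical_ofList_of_isRegular [IsNoetherianRing S] {rs : List S}
    (hrs : IsRegular S rs) (hdim : ringKrullDim S ≤ rs.length) :
    maximalIdeal S ≤ (Ideal.ofList rs).radical := by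
  refine maximalIdeal_le_radical_of_ringKrullDim_quotient_le_zero
    (ENat.WithBot.add_le_add_natCast_right_iff (c := rs.length).1 ?_)
  rwa [ringKrullDim_add_length_eq_ringKrullDim_of_isRegular rs hrs, zero_add]

variable [IsNoetherianRing S]

theorem IsCohenMacaulayRing.mem_span_image_compl_of_mul_mem (hS : IsCohenMacaulayRing S)
    (hdim : ringKrullDim S = t) (hx : IsSOP S x) {i : Fin t} {a : S}
    (ha : x i * a ∈ Ideal.span (x '' {i}ᶜ)) : a ∈ Ideal.span (x '' {i}ᶜ) := by
  obtain ⟨rs, hrs, hlen⟩ := hS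
  let l : List S := (Finset.univ.erase i).toList.map x
  have hl : Ideal.ofList l = Ideal.span (x '' {i}ᶜ) := by
    rw [Ideal.ofList]
    congr 1
    ext s
    simp [l]
  have hlx : Ideal.ofList (l ++ [x i]) = Ideal.span (Set.range x) := by
    rw [Ideal.ofList_append, hl, Ideal.ofList_singleton, ← Ideal.span_union, ← Set.image_singleton,
      ← Set.image_union, Set.compl_union_self, Set.image_univ]
  have hreg : IsWeaklyRegular S (l ++ [x i]) := by
    refine isWeaklyRegular_of_maximalIdeal_le_radical (rs := rs) (I := ⊥) bot_le ?_
      (fun r hr => mem_maximalIdeal_of_isRegular hrs hr) ?_ ?_ ?_ hrs.1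
    · have hrs_length : rs.length = t := by exact_mod_cast hlen.trans hdim
      simp [l, hrs_length, Nat.sub_add_cancel i.pos]
    · intro s hs
      simp only [l, List.mem_append, List.mem_map, List.mem_singleton] at hs
      obtain ⟨j, -, rfl⟩ | rfl := hs <;> exact hx.1 _
    · rw [bot_sup_eq]
      exact maximalIdeal_le_radical_ofList_of_isRegular hrs hlen.ge
    · rw [bot_sup_eq, hlx, hx.2]
  rw [isWeaklyRegular_append_iff, isWeaklyRegular_singleton_iff, hl] at hreg
  have hmk := isSMulRegular_iff_right_eq_zero_of_smul.1 hreg.2 (Submodule.Quotient.mk a)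
  rw [← Submodule.Quotient.mk_smul, Submodule.Quotient.mk_eq_zero,
    Submodule.Quotient.mk_eq_zero] at hmk
  simpa using hmk (by simpa using ha)

end CohenMacaulay

/-! ### Changing one member of a sequence -/

section Update

variable {R : Type*} [CommRing R] {t : ℕ} {x : Fin t → R} {i : Fin t} {f g a : R}

theorem span_range_update (x : Fin t → R) (i : Fin t) (g : R) :
    Ideal.span (Set.range (Function.update x i g)) =
      Ideal.span {g} ⊔ Ideal.span (x '' {i}ᶜ) := by
  rw [← Ideal.span_union, ← Set.image_univ, ← Set.union_compl_self {i}, Set.image_union,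
    Set.image_singleton, Function.update_self]
  congr 2
  exact Set.image_congr fun j hj => Function.update_of_ne hj _ _

theorem mem_span_range_update_iff :
    a ∈ Ideal.span (Set.range (Function.update x i g)) ↔
      ∃ b, a - b * g ∈ Ideal.span (x '' {i}ᶜ) := by
  rw [span_range_update, Ideal.mem_span_singleton_sup]
  exact ⟨fun ⟨b, c, hc, h⟩ => ⟨b, by rwa [← h, add_sub_cancel_left]⟩,
    fun ⟨b, hb⟩ => ⟨b, _, hb, add_sub_cancel _ _⟩⟩

theorem IsCohenMacaulayRing.mem_span_update_of_mul_mem [IsNoetherianRing R] [IsLocalRing R]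
    (hR : IsCohenMacaulayRing R) (hdim : ringKrullDim R = t)
    (hx : IsSOP R (Function.update x i f))
    (ha : f * a ∈ Ideal.span (Set.range (Function.update x i (f * g)))) :
    a ∈ Ideal.span (Set.range (Function.update x i g)) := by
  obtain ⟨b, hb⟩ := mem_span_range_update_iff.1 ha
  refine mem_span_range_update_iff.2 ⟨b, ?_⟩
  have himage : Function.update x i f '' {i}ᶜ = x '' {i}ᶜ :=
    Set.image_congr fun j hj => Function.update_of_ne hj _ _
  rw [← himage]
  refine hR.mem_span_image_compl_of_mul_mem hdim hx ?_
  rw [himage, Function.update_self]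
  convert hb using 1
  ring

/-- The exponents are lowered one coordinate at a time. -/
theorem IsCohenMacaulayRing.limitClosure_le [IsNoetherianRing R] [IsLocalRing R]
    (hR : IsCohenMacaulayRing R) (hdim : ringKrullDim R = t) (hx : IsSOP R x) :
    limitClosure (M := R) x ≤ Ideal.span (Set.range x) := by
  intro a ha
  obtain ⟨n, hn⟩ := mem_limitClosure_iff.1 ha
  suffices ∀ s : Finset (Fin t), (∏ i ∈ s, x i ^ (n + 1)) * a ∈
      Ideal.span (Set.range (s.piecewise (fun i => x i ^ (n + 2)) x)) →
      a ∈ Ideal.span (Set.range x) by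
    refine this Finset.univ ?_
    rw [Finset.piecewise_univ, Finset.prod_pow]
    exact prod_pow_mul_mem_span_of_le n.le_succ hn
  intro s
  induction s using Finset.induction_on with
  | empty => simp
  | insert i s hi ih =>
    intro ha
    set z := s.piecewise (fun i => x i ^ (n + 2)) x with hz
    have hzi : z i = x i := Finset.piecewise_eq_of_notMem s _ _ hi
    have hsop : IsSOP R (Function.update z i (x i ^ (n + 1))) := hx.of_eq_pow fun j => by
      obtain rfl | hji := eq_or_ne j i
      · exact ⟨n, Function.update_self ..⟩
      rw [Function.update_of_ne hji]
      by_cases hj : j ∈ s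
      · exact ⟨n + 1, Finset.piecewise_eq_of_mem s _ _ hj⟩
      · exact ⟨0, by rw [hz, Finset.piecewise_eq_of_notMem s _ _ hj, zero_add, pow_one]⟩
    rw [Finset.prod_insert hi, mul_assoc, Finset.piecewise_insert, ← hz,
      pow_succ (x i) (n + 1)] at ha
    have hlower := hR.mem_span_update_of_mul_mem hdim hsop ha
    rw [← hzi, Function.update_eq_self] at hlower
    exact ih hlower

end Update

/-! ### Sequences with injective determinantal map -/

/-- The determinantal map `R/(x) → R/(y)^lim` is injective. All the matrices taking `x` to `y`
induce the same map; if there are none, the condition is vacuous. -/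
def DetInjective {R : Type*} [CommRing R] {t : ℕ} (x y : Fin t → R) : Prop :=
  ∀ A : Matrix (Fin t) (Fin t) R, A.mulVec x = y →
    ∀ z, A.det * z ∈ limitClosure (M := R) y → z ∈ Ideal.span (Set.range x)

section DetInjective

variable {R : Type*} [CommRing R] {t : ℕ} {x y : Fin t → R} {i : Fin t} {g h : R}

theorem DetInjective.of_mulVec_eq {A : Matrix (Fin t) (Fin t) R} (hA : A.mulVec x = y)
    (h : ∀ z, A.det * z ∈ limitClosure (M := R) y → z ∈ Ideal.span (Set.range x)) :
    DetInjective x y := by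
  intro B hB z hz
  refine h z ?_
  convert add_mem (Ideal.mul_mem_left _ z (det_sub_det_mem_limitClosure hA hB)) hz using 1
  ring

theorem mulVec_diagonal_update_one (x : Fin t → R) (i : Fin t) (g h : R) :
    (Matrix.diagonal (Function.update 1 i g)).mulVec (Function.update x i h) =
      Function.update x i (g * h) := by
  funext j
  rw [Matrix.mulVec_diagonal]
  obtain rfl | hj := eq_or_ne j i
  · simp
  · simp [hj]

theorem det_diagonal_update_one (i : Fin t) (g : R) :
    (Matrix.diagonal (Function.update 1 i g)).det = g := by
  simp [Matrix.det_diagonal, Finset.prod_update_of_mem]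

/-- Uses `0 → R/(…, g, …) → R/(…, g h, …) → R/(…, h, …) → 0`, whose first map is multiplication
by `h`. -/
theorem DetInjective.update_mul (hg : DetInjective (Function.update x i g) y)
    (hh : DetInjective (Function.update x i h) y) :
    DetInjective (Function.update x i (g * h)) y := by
  intro A hA z hz
  have hAg : (A * Matrix.diagonal (Function.update 1 i g)).mulVec (Function.update x i h) = y := by
    rw [← Matrix.mulVec_mulVec, mulVec_diagonal_update_one, hA]
  have hAh : (A * Matrix.diagonal (Function.update 1 i h)).mulVec (Function.update x i g) = y := by
    rw [← Matrix.mulVec_mulVec, mulVec_diagonal_update_one, mul_comm h g, hA]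
  obtain ⟨b, hb⟩ := mem_span_range_update_iff.1 <| hh _ hAg z <| by
    rw [Matrix.det_mul, det_diagonal_update_one, mul_right_comm]
    exact Ideal.mul_mem_right _ _ hz
  obtain ⟨c, hc⟩ := mem_span_range_update_iff.1 <| hg _ hAh b <| by
    have hAy (j : Fin t) : A.mulVec (Function.update x i (g * h)) j ∈ limitClosure (M := R) y :=
      span_le_limitClosure y (congrFun hA j ▸ mem_span_range y j)
    have hdet : A.det * (z - b * h) ∈ limitClosure (M := R) y :=
      det_mul_mem A hAy (mem_span_range_update_iff.2 ⟨0, by simpa using hb⟩)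
    rw [Matrix.det_mul, det_diagonal_update_one]
    convert sub_mem hz hdet using 1
    ring
  refine mem_span_range_update_iff.2 ⟨c, ?_⟩
  convert add_mem hb (Ideal.mul_mem_left _ h hc) using 1
  ring

theorem DetInjective.update_pow (hxy : DetInjective x y) (i : Fin t) (n : ℕ) :
    DetInjective (Function.update x i (x i ^ (n + 1))) y := by
  have hx : DetInjective (Function.update x i (x i)) y := by rwa [Function.update_eq_self]
  induction n with
  | zero => rwa [zero_add, pow_one]
  | succ n ih => exact pow_succ (x i) (n + 1) ▸ ih.update_mul hx

theorem DetInjective.pow_left (hxy : DetInjective x y) (n : ℕ) :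
    DetInjective (fun i => x i ^ (n + 1)) y := by
  suffices ∀ s : Finset (Fin t), DetInjective (s.piecewise (fun i => x i ^ (n + 1)) x) y by
    simpa using this Finset.univ
  intro s
  induction s using Finset.induction_on with
  | empty => rwa [Finset.piecewise_empty]
  | insert i s hi ih =>
    have hpow := ih.update_pow i n
    rwa [Finset.piecewise_eq_of_notMem s _ _ hi,
      ← Finset.piecewise_insert s (fun i => x i ^ (n + 1))] at hpow

theorem DetInjective.pow_right (hxy : DetInjective x y)
    (hy : ∀ i, y i ∈ Ideal.span (Set.range x)) (n : ℕ) :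
    DetInjective x fun i => y i ^ (n + 1) := by
  obtain ⟨A, hA⟩ := exists_mulVec_eq hy
  refine DetInjective.of_mulVec_eq (A := Matrix.diagonal (fun i => y i ^ n) * A) ?_ fun z hz =>
    hxy A hA z (mem_limitClosure_of_prod_pow_mul_mem (k := n) ?_)
  · rw [← Matrix.mulVec_mulVec, hA]
    simpa using mulVec_diagonal_pow y n 1
  · rwa [Matrix.det_mul, Matrix.det_diagonal, Finset.prod_pow, mul_assoc] at hz

end DetInjective

/-! ### Height and generation up to radical -/

section Height

variable {S : Type*} [CommRing S] [IsNoetherianRing S]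

/-- Each element is chosen by prime avoidance outside the minimal primes of its predecessors. -/
theorem exists_forall_mem_forall_add_le_height {I J : Ideal S} {h : ℕ∞} (hJ : h ≤ J.height)
    (n : ℕ) : ∃ v : Fin n → S, (∀ i, v i ∈ I) ∧ ∀ Q : Ideal S, Q.IsPrime →
      J ⊔ Ideal.span (Set.range v) ≤ Q → ¬ I ≤ Q → h + n ≤ Q.height := by
  induction n with
  | zero =>
    refine ⟨Fin.elim0, fun i => i.elim0, fun Q _ hJQ _ => ?_⟩
    simpa using hJ.trans (Ideal.height_mono (le_sup_left.trans hJQ))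
  | succ n ih =>
    obtain ⟨v, hvI, hv⟩ := ih
    obtain ⟨b, hbI, hb⟩ := exists_mem_forall_notMem_of_finite I
      (J ⊔ Ideal.span (Set.range v)).finite_minimalPrimes_of_isNoetherianRing
      fun p hp => hp.isPrime
    refine ⟨Fin.cons b v, Fin.cases hbI hvI, fun Q hQ hle hIQ => ?_⟩
    rw [Fin.range_cons, Ideal.span_insert, sup_left_comm, sup_le_iff,
      Ideal.span_singleton_le_iff_mem] at hle
    obtain ⟨q, hq, hqQ⟩ := Ideal.exists_minimalPrimes_le hle.2
    have hqprime := hq.isPrime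
    have hIq : ¬ I ≤ q := fun h => hIQ (h.trans hqQ)
    have hlt : q < Q := hqQ.lt_of_ne fun h => hb q hq hIq (h ▸ hle.1)
    calc h + (n + 1 : ℕ) = h + n + 1 := by rw [Nat.cast_succ, add_assoc]
      _ ≤ q.height + 1 := add_le_add_left (hv q hqprime hq.1.2 hIq) 1
      _ ≤ Q.height := Ideal.height_add_one_le_of_lt_of_isPrime hlt

theorem exists_forall_mem_natCast_le_height {I : Ideal S} {n : ℕ} (hn : n ≤ I.height) :
    ∃ v : Fin n → S, (∀ i, v i ∈ I) ∧ n ≤ (Ideal.span (Set.range v)).height := by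
  obtain ⟨v, hvI, hv⟩ :=
    exists_forall_mem_forall_add_le_height (I := I) (J := ⊥) (h := 0) zero_le n
  rw [bot_sup_eq] at hv
  refine ⟨v, hvI, ?_⟩
  rw [Ideal.height_eq_inf_minimalPrimes]
  refine le_iInf₂ fun Q hQ => ?_
  by_cases hIQ : I ≤ Q
  · exact hn.trans (Ideal.height_mono hIQ)
  · simpa using hv Q hQ.isPrime hQ.1.2 hIQ

theorem exists_forall_mem_le_radical_sup_span [IsLocalRing S] {I J : Ideal S} {h n : ℕ}
    (hdim : ringKrullDim S = (h + n : ℕ)) (hJ : h ≤ J.height) (hI : I ≤ maximalIdeal S) :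
    ∃ v : Fin n → S, (∀ i, v i ∈ I) ∧ I ≤ (J ⊔ Ideal.span (Set.range v)).radical := by
  obtain ⟨v, hvI, hv⟩ := exists_forall_mem_forall_add_le_height (I := I) hJ n
  refine ⟨v, hvI, ?_⟩
  rw [Ideal.radical_eq_sInf, le_sInf_iff]
  rintro Q ⟨hJQ, hQ⟩
  by_contra hIQ
  have hlt : Q < maximalIdeal S :=
    (le_maximalIdeal hQ.ne_top).lt_of_ne fun h => hIQ (hI.trans h.ge)
  have hm : (maximalIdeal S).height = (h + n : ℕ) := by
    exact_mod_cast maximalIdeal_height_eq_ringKrullDim.trans hdim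
  have hle := (add_le_add_left (hv Q hQ hJQ hIQ) 1).trans
    (Ideal.height_add_one_le_of_lt_of_isPrime hlt)
  rw [hm] at hle
  exact absurd (by exact_mod_cast hle : h + n + 1 ≤ h + n) (Nat.not_succ_le_self _)

theorem exists_notMem_forall_mul_mem_of_mem_minimalPrimes {J p : Ideal S}
    (hp : p ∈ J.minimalPrimes) : ∃ z ∉ J, ∀ a ∈ p, a * z ∈ J := by
  have hass : IsAssociatedPrime p (S ⧸ J) :=
    Module.associatedPrimes.minimalPrimes_annihilator_subset_associatedPrimes S (S ⧸ J) (by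
      rwa [Ideal.annihilator_quotient])
  obtain ⟨hprime, z, hz⟩ := isAssociatedPrime_iff.1 hass
  obtain ⟨z, rfl⟩ := Ideal.Quotient.mk_surjective z
  have hpz (a : S) : a ∈ p ↔ a * z ∈ J := by
    rw [hz, Submodule.mem_colon_singleton, Submodule.mem_bot, ← Ideal.Quotient.eq_zero_iff_mem]
    rfl
  refine ⟨z, fun hzJ => hprime.ne_top ?_, fun a => (hpz a).1⟩
  rwa [Ideal.eq_top_iff_one, hpz, one_mul]

theorem exists_notMem_sup_maximalIdeal_pow [IsLocalRing S] {J : Ideal S} {z : S} (hz : z ∉ J) :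
    ∃ n, z ∉ J ⊔ maximalIdeal S ^ n := by
  contrapose! hz
  rw [← Ideal.Quotient.eq_zero_iff_mem, ← Submodule.mem_bot S,
    ← (maximalIdeal S).iInf_pow_smul_eq_bot_of_isLocalRing Ideal.IsPrime.ne_top',
    Submodule.mem_iInf]
  intro n
  rw [Ideal.smul_top_eq_map, Submodule.restrictScalars_mem, Ideal.Quotient.algebraMap_eq,
    Ideal.mem_quotient_iff_mem_sup, sup_comm]
  exact hz n

end Height

/-! ### A determinantal map which is not injective -/

section Append

variable {R : Type*} [CommRing R] {m n : ℕ} {v : Fin m → R} {w : Fin n → R}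

theorem span_range_append (v : Fin m → R) (w : Fin n → R) :
    Ideal.span (Set.range (Fin.append v w)) =
      Ideal.span (Set.range v) ⊔ Ideal.span (Set.range w) := by
  rw [← Ideal.span_union, ← Set.Sum.elim_range, ← finSumFinEquiv.surjective.range_comp]
  congr 2
  funext i
  cases i <;> simp

theorem radical_sup_span_le_radical_span_append_pow (k : ℕ) :
    (Ideal.span (Set.range v) ⊔ Ideal.span (Set.range w)).radical ≤
      (Ideal.span (Set.range (Fin.append v fun i => w i ^ k))).radical := by
  rw [Ideal.radical_le_radical_iff, span_range_append]
  exact sup_le (le_sup_left.trans Ideal.le_radical)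
    ((span_le_radical_span_pow w k).trans (Ideal.radical_mono le_sup_right))

theorem mem_limitClosure_append {z : R} (h : (∏ i, w i) * z ∈ Ideal.span (Set.range v)) :
    z ∈ limitClosure (M := R) (Fin.append v w) := by
  refine mem_limitClosure_iff.2 ⟨1, ?_⟩
  have hprod := prod_pow_mul_mem_span_pow (x := v) (k := 1) (m := 1) (by simpa using h)
  rw [Fin.prod_univ_add, pow_one]
  simp only [Fin.append_left, Fin.append_right]
  rw [mul_assoc]
  refine Ideal.span_mono ?_ (by simpa using hprod)
  rintro _ ⟨i, rfl⟩
  exact ⟨Fin.castAdd n i, by simp⟩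

end Append

section LocalRing

variable {S : Type*} [CommRing S] [IsNoetherianRing S] [IsLocalRing S] {p : Ideal S}

theorem exists_isSOP_append_notMem_span {h n : ℕ} (hdim : ringKrullDim S = (h + n : ℕ))
    {a : Fin h → S} (ha : h ≤ (Ideal.span (Set.range a)).height) {z : S}
    (hz : z ∉ Ideal.span (Set.range a)) :
    ∃ b : Fin n → S, IsSOP S (Fin.append a b) ∧ z ∉ Ideal.span (Set.range (Fin.append a b)) := by
  obtain ⟨b, hbm, hb⟩ := exists_forall_mem_le_radical_sup_span hdim ha le_rfl
  obtain ⟨N, hzN⟩ := exists_notMem_sup_maximalIdeal_pow hz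
  have ham : Ideal.span (Set.range a) ≤ maximalIdeal S :=
    le_maximalIdeal fun htop => hz (htop ▸ Submodule.mem_top)
  have hbN : Ideal.span (Set.range fun i => b i ^ (N + 1)) ≤ maximalIdeal S ^ N :=
    Ideal.span_le.2 <| Set.range_subset_iff.2 fun i =>
      Ideal.pow_le_pow_right N.le_succ (Ideal.pow_mem_pow (hbm i) _)
  refine ⟨fun i => b i ^ (N + 1), isSOP_iff_maximalIdeal_le_radical.2 ⟨Fin.addCases ?_ ?_,
    hb.trans (radical_sup_span_le_radical_span_append_pow _)⟩,
    fun hzb => hzN (sup_le_sup_left hbN _ ?_)⟩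
  · rwa [← span_range_append]
  · intro i
    rw [Fin.append_left]
    exact ham (mem_span_range a i)
  · intro i
    rw [Fin.append_right]
    exact Ideal.pow_mem_of_mem _ (hbm i) _ N.succ_pos

theorem exists_height_eq_add_succ_eq_ringKrullDim {t : ℕ} (hdim : ringKrullDim S = t)
    [p.IsPrime] (hp : p < maximalIdeal S) : ∃ h k : ℕ, p.height = h ∧ h + (k + 1) = t := by
  obtain ⟨h, hh⟩ := ENat.ne_top_iff_exists.1 (p.height_ne_top Ideal.IsPrime.ne_top')
  have hle := Ideal.height_add_one_le_of_lt_of_isPrime hp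
  rw [← WithBot.coe_le_coe, maximalIdeal_height_eq_ringKrullDim, hdim, ← hh] at hle
  obtain ⟨k, hk⟩ := Nat.exists_eq_add_of_le (by exact_mod_cast hle : h + 1 ≤ t)
  exact ⟨h, k, hh.symm, by rw [hk, add_assoc, add_comm 1]⟩

/-- With `h = height p`, the sequences `u` and `w` share their first `h` elements, over whose ideal
`p` is minimal, and `z` is multiplied into that ideal by `p`. -/
theorem exists_isSOP_exists_mem_limitClosure_notMem_span {t : ℕ} (hdim : ringKrullDim S = t)
    [p.IsPrime] (hp : p < maximalIdeal S) :
    ∃ (u w : Fin t → S) (z : S), IsSOP S u ∧ (∀ i, w i ∈ Ideal.span (Set.range u)) ∧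
      p ≤ (Ideal.span (Set.range w)).radical ∧
      z ∈ limitClosure (M := S) w ∧ z ∉ Ideal.span (Set.range u) := by
  obtain ⟨h, k, hh, rfl⟩ := exists_height_eq_add_succ_eq_ringKrullDim hdim hp
  obtain ⟨a, hap, ha⟩ := exists_forall_mem_natCast_le_height hh.ge
  have hpmin : p ∈ (Ideal.span (Set.range a)).minimalPrimes :=
    Ideal.mem_minimalPrimes_of_height_le (Ideal.span_le.2 (Set.range_subset_iff.2 hap))
      (hh ▸ ha)
  obtain ⟨z, hza, hpz⟩ := exists_notMem_forall_mul_mem_of_mem_minimalPrimes hpmin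
  obtain ⟨b, hu, hzu⟩ := exists_isSOP_append_notMem_span hdim ha hza
  obtain ⟨c, hcp, hc⟩ := exists_forall_mem_le_radical_sup_span hdim ha hp.le
  obtain ⟨M, hM⟩ := exists_pow_mem fun i => hu.2.ge (hp.le (hcp i))
  have hprod : ∏ i, c i ^ (M + 1) ∈ p :=
    Ideal.mem_of_dvd _ (Finset.dvd_prod_of_mem _ (Finset.mem_univ 0))
      (Ideal.pow_mem_of_mem _ (hcp 0) _ M.succ_pos)
  refine ⟨Fin.append a b, Fin.append a fun i => c i ^ (M + 1), z, hu,
    Fin.addCases (fun i => ?_) fun i => ?_,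
    hc.trans (radical_sup_span_le_radical_span_append_pow _),
    mem_limitClosure_append (hpz _ hprod), hzu⟩
  · rw [Fin.append_left, ← Fin.append_left a b i]
    exact mem_span_range _ _
  · rw [Fin.append_right]
    exact hM i

end LocalRing

/-! ### Determinantal maps over a Cohen–Macaulay ring -/

/-- For powers of `y` that are combinations of `w`, the determinantal map from `u` through `w`
equals the one through a power of `x`, and the latter is injective. -/
theorem DetInjective.mem_limitClosure {R : Type*} [CommRing R] {t : ℕ} {x y u w : Fin t → R}
    {z : R} (hxy : DetInjective x y)
    (hy : ∀ i, y i ∈ Ideal.span (Set.range x)) (hyw : ∀ i, y i ∈ (Ideal.span (Set.range w)).radical)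
    (hwu : ∀ i, w i ∈ Ideal.span (Set.range u))
    (hxu : ∀ i, x i ∈ (Ideal.span (Set.range u)).radical)
    (hux : ∀ i, u i ∈ (Ideal.span (Set.range x)).radical) (hz : z ∈ limitClosure (M := R) w) :
    z ∈ limitClosure (M := R) u := by
  obtain ⟨m, hm⟩ := exists_pow_mem hxu
  have hyx : ∀ i, y i ∈ (Ideal.span (Set.range fun i => x i ^ (m + 1))).radical := fun i =>
    span_le_radical_span_pow x (m + 1) (hy i)
  obtain ⟨n, hn⟩ := exists_pow_mem (I := Ideal.span (Set.range w) ⊓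
    Ideal.span (Set.range fun i => x i ^ (m + 1))) fun i => by
      rw [Ideal.radical_inf]
      exact ⟨hyw i, hyx i⟩
  obtain ⟨E, hE⟩ := exists_mulVec_eq hwu
  obtain ⟨D, hD⟩ := exists_mulVec_eq hm
  obtain ⟨F, hF⟩ := exists_mulVec_eq fun i => (hn i).1
  obtain ⟨G, hG⟩ := exists_mulVec_eq fun i => (hn i).2
  have hFE : (F * E).mulVec u = fun i => y i ^ (n + 1) := by rw [← Matrix.mulVec_mulVec, hE, hF]
  have hGD : (G * D).mulVec u = fun i => y i ^ (n + 1) := by rw [← Matrix.mulVec_mulVec, hD, hG]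
  have hGDz : G.det * (D.det * z) ∈ limitClosure (M := R) fun i => y i ^ (n + 1) := by
    have hFEz := det_mul_mem_limitClosure hF (Ideal.mul_mem_left _ E.det hz)
    convert add_mem (Ideal.mul_mem_left _ z (det_sub_det_mem_limitClosure hGD hFE)) hFEz using 1
    rw [Matrix.det_mul, Matrix.det_mul]
    ring
  have hDz : D.det * z ∈ Ideal.span (Set.range fun i => x i ^ (m + 1)) :=
    (hxy.pow_right hy n).pow_left m G hG _ hGDz
  refine mem_limitClosure_of_det_mul_mem hD (fun i => ?_) (span_le_limitClosure _ hDz)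
  exact Ideal.radical_le_radical_iff.2 (span_le_radical_span_pow x (m + 1)) (hux i)

section CohenMacaulay

variable {S : Type*} [CommRing S] [IsNoetherianRing S] [IsLocalRing S] {t : ℕ} {x y : Fin t → S}

theorem IsCohenMacaulayRing.isSOP_of_detInjective (hS : IsCohenMacaulayRing S)
    (hdim : ringKrullDim S = t) (hx : IsSOP S x) (hy : ∀ i, y i ∈ Ideal.span (Set.range x))
    (hxy : DetInjective x y) : IsSOP S y := by
  have hxm : Ideal.span (Set.range x) ≤ maximalIdeal S := hx.2 ▸ Ideal.le_radical
  refine isSOP_iff_maximalIdeal_le_radical.2 ⟨fun i => hxm (hy i), ?_⟩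
  rw [Ideal.radical_eq_sInf, le_sInf_iff]
  rintro p ⟨hyp, hp⟩
  by_contra hmp
  obtain ⟨u, w, z, hu, hwu, hpw, hzw, hzu⟩ := exists_isSOP_exists_mem_limitClosure_notMem_span hdim
    (lt_of_le_not_ge (le_maximalIdeal hp.ne_top) hmp)
  refine hzu (hS.limitClosure_le hdim hu (hxy.mem_limitClosure hy (fun i => ?_) hwu
    (fun i => ?_) (fun i => ?_) hzw))
  · exact hpw (hyp (mem_span_range y i))
  · exact hu.2 ▸ hx.1 i
  · exact hx.2 ▸ hu.1 i

theorem IsCohenMacaulayRing.isSOP_iff_forall_det_mul_mem (hS : IsCohenMacaulayRing S)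
    (hdim : ringKrullDim S = t) (hx : IsSOP S x) {A : Matrix (Fin t) (Fin t) S}
    (hA : A.mulVec x = y) :
    IsSOP S y ↔
      ∀ z, A.det * z ∈ limitClosure (M := S) y → z ∈ limitClosure (M := S) x := by
  refine ⟨fun hy z => mem_limitClosure_of_det_mul_mem hA fun i => hy.2 ▸ hx.1 i, fun h => ?_⟩
  exact hS.isSOP_of_detInjective hdim hx (fun i => hA ▸ mulVec_mem_span A x i)
    (.of_mulVec_eq hA fun z hz => hS.limitClosure_le hdim hx (h z hz))

end CohenMacaulay

section Quotient

variable {R : Type*} [CommRing R] [IsLocalRing R] {t : ℕ} {U : Ideal R} [IsLocalRing (R ⧸ U)]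
  {x : Fin t → R}

variable (U) in
theorem comap_mk_maximalIdeal :
    (maximalIdeal (R ⧸ U)).comap (Ideal.Quotient.mk U) = maximalIdeal R :=
  eq_maximalIdeal (Ideal.comap_isMaximal_of_surjective _ Ideal.Quotient.mk_surjective)

theorem isSOP_mk_iff : IsSOP (R ⧸ U) (fun i => Ideal.Quotient.mk U (x i)) ↔
    (Ideal.span (Set.range x) ⊔ U).radical = maximalIdeal R := by
  have hcomap : (Ideal.span (Set.range fun i => Ideal.Quotient.mk U (x i))).comap
      (Ideal.Quotient.mk U) = Ideal.span (Set.range x) ⊔ U :=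
    Ideal.ext fun _ => mk_mem_span_range_mk_iff
  rw [← comap_mk_maximalIdeal U, ← hcomap, ← Ideal.comap_radical,
    (Ideal.comap_injective_of_surjective _ Ideal.Quotient.mk_surjective).eq_iff]
  exact and_iff_right_of_imp fun h i => h ▸ Ideal.le_radical (mem_span_range _ i)

theorem IsSOP.quotient_mk (hx : IsSOP R x) : IsSOP (R ⧸ U) fun i => Ideal.Quotient.mk U (x i) := by
  have hU : U ≤ maximalIdeal R :=
    le_maximalIdeal (Ideal.Quotient.nontrivial_iff.1 inferInstance)
  refine isSOP_mk_iff.2 (le_antisymm ?_ (hx.2.ge.trans (Ideal.radical_mono le_sup_left)))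
  rw [(maximalIdeal.isMaximal R).isPrime.radical_le_iff]
  exact sup_le (hx.2 ▸ Ideal.le_radical) hU

end Quotient

theorem isLocalRing_quotient_of_moduleDim_lt {R : Type*} [CommRing R] [IsLocalRing R]
    {t : ℕ} {U : Ideal R} (hdim : ringKrullDim R = t)
    (hU : moduleDim R U < (t : WithBot ℕ∞)) : IsLocalRing (R ⧸ U) := by
  have : Nontrivial (R ⧸ U) := not_subsingleton_iff_nontrivial.1 fun _ =>
    WithBot.bot_ne_coe (ringKrullDim_eq_bot_of_subsingleton.symm.trans
      (ringKrullDim_quotient_eq_of_moduleDim_lt hdim hU))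
  exact IsLocalRing.of_surjective' _ Ideal.Quotient.mk_surjective

/-- Let `(R, m)` be a Noetherian local ring of dimension `t` whose quotient by the unmixed
component `U = U_R(0)` (the largest ideal of dimension `< t`) is Cohen–Macaulay.  If `x` is
a system of parameters of `R` and `(y) ⊆^A (x)`, then the image of `y` is a system of
parameters of `R/U` (i.e. `√((y) + U) = m`) if and only if the determinantal map
`det A : R/(x)^lim → R/(y)^lim` is injective (expressed elementwise). -/
theorem sop_mod_unmixed_iff_determinantal_map_injective_of_CM
    {R : Type*} [CommRing R] [IsNoetherianRing R] [IsLocalRing R]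
    {t : ℕ} (hdim : ringKrullDim R = t)
    (U : Ideal R) (hUdim : moduleDim R U < (t : WithBot ℕ∞))
    (hUmax : ∀ J : Ideal R, moduleDim R J < (t : WithBot ℕ∞) → J ≤ U)
    (hCM : IsCohenMacaulayRing (R ⧸ U))
    (x y : Fin t → R) (A : Matrix (Fin t) (Fin t) R)
    (hx : IsSOP R x) (hyA : ∀ i, y i = ∑ j, A i j * x j) :
    (Ideal.span (Set.range y) ⊔ U).radical = maximalIdeal R ↔
      ∀ r : R, A.det * r ∈ limitClosure (M := R) y → r ∈ limitClosure (M := R) x := by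
  have : IsLocalRing (R ⧸ U) := isLocalRing_quotient_of_moduleDim_lt hdim hUdim
  have hA : (A.map (Ideal.Quotient.mk U)).mulVec (fun i => Ideal.Quotient.mk U (x i)) =
      fun i => Ideal.Quotient.mk U (y i) := by
    funext i
    simp [hyA, Matrix.mulVec, dotProduct]
  have hdet (r : R) : (A.map (Ideal.Quotient.mk U)).det * Ideal.Quotient.mk U r =
      Ideal.Quotient.mk U (A.det * r) := by
    rw [map_mul, RingHom.map_det, RingHom.mapMatrix_apply]
  rw [← isSOP_mk_iff, hCM.isSOP_iff_forall_det_mul_mem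
      (ringKrullDim_quotient_eq_of_moduleDim_lt hdim hUdim) hx.quotient_mk hA,
    Ideal.Quotient.mk_surjective.forall]
  simp only [hdet, mk_mem_limitClosure_iff_of_moduleDim_lt hUdim]
end

section
/- Let (R, m) be a catenary equidimensional Noetherian local ring of dimension t and let x = x_1, ..., x_t be a sequence of t elements of R. Then x is a system of parameters of R if and only if the image of x is a system of parameters of R̂/U_{R̂}(0), where R̂ is the m-adic completion of R. -/
open IsLocalRing

/-- A ring is catenary if, for any primes `p ≤ q`, all saturated chains of primes from `p`
to `q` have the same length. -/
def IsCatenaryRing (R : Type*) [CommRing R] : Prop :=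
  ∀ p q : PrimeSpectrum R, p ≤ q →
    ∀ c₁ c₂ : LTSeries (PrimeSpectrum R),
      c₁.head = p → c₁.last = q → c₂.head = p → c₂.last = q →
      (∀ i : Fin c₁.length, c₁ i.castSucc ⋖ c₁ i.succ) →
      (∀ i : Fin c₂.length, c₂ i.castSucc ⋖ c₂ i.succ) →
      c₁.length = c₂.length

/-- A ring is equidimensional if `dim R/p = dim R` for every minimal prime `p`. -/
def IsEquidimensionalRing (R : Type*) [CommRing R] : Prop :=
  ∀ p ∈ minimalPrimes R, ringKrullDim (R ⧸ p) = ringKrullDim R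

/-!
Every prime `p` of `R` lies on a chain of primes of length `dim R` ending at `m`: a saturated chain
from a minimal prime through `p` to `m` has the same length as a longest chain from that minimal
prime to `m`, by catenarity, and the latter has length `dim R`, by equidimensionality. Going-down
for the flat map `R → R̂` lifts this chain to a chain in `R̂` ending at the maximal ideal. Its
smallest member `P₀` satisfies `dim R̂/P₀ ≥ dim R > dim V`, so `P₀` does not contain `Ann V` and
therefore contains `V`. Hence every prime of `R` is the contraction of a prime of `R̂` containing
`V`. As `mR̂` is the maximal ideal of `R̂`, it follows that `m` is the only prime of `R` containing
`x` if and only if the maximal ideal of `R̂` is the only prime containing `xR̂ + V`.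
-/

section SaturatedChains

variable {α : Type*} [PartialOrder α]

/-- A saturated chain in a partial order: each member is covered by the next one. It is a predicate
on `LTSeries` so that it matches the chains occurring in `IsCatenaryRing`. -/
def IsSaturatedChain (s : LTSeries α) : Prop :=
  ∀ i : Fin s.length, s i.castSucc ⋖ s i.succ

variable [WellFoundedLT α] [WellFoundedGT α]

lemma exists_isSaturatedChain_refinement (s : LTSeries α) :
    ∃ c : LTSeries α, IsSaturatedChain c ∧ c.head = s.head ∧ c.last = s.last ∧
      s.length ≤ c.length ∧ ∀ a ∈ s, a ∈ c := by
  obtain ⟨c, i, hci, hi_zero, hi_last⟩ := s.exists_relSeries_covBy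
  have hci' (j : Fin (s.length + 1)) : c (i j) = s j := congr_fun hci j
  refine ⟨⟨c.length, c, fun j ↦ (c.step j).lt⟩, c.step, ?_, ?_, ?_, ?_⟩
  · exact (congrArg c hi_zero).symm.trans (hci' 0)
  · exact (congrArg c hi_last).symm.trans (hci' (Fin.last _))
  · simpa using Fintype.card_le_of_embedding i
  · rintro _ ⟨j, rfl⟩
    exact ⟨i j, hci' j⟩

lemma exists_isSaturatedChain_extension (s : LTSeries α) {b : α} (hb : s.last ≤ b) :
    ∃ c : LTSeries α, IsSaturatedChain c ∧ c.head = s.head ∧ c.last = b ∧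
      s.length ≤ c.length ∧ ∀ a ∈ s, a ∈ c := by
  rcases hb.eq_or_lt with rfl | hb
  · exact exists_isSaturatedChain_refinement s
  · obtain ⟨c, hc, hhead, hlast, hlength, hsub⟩ :=
      exists_isSaturatedChain_refinement (s.snoc b hb)
    refine ⟨c, hc, hhead.trans (s.head_snoc b hb), hlast.trans (s.last_snoc b hb),
      (Nat.le_succ _).trans hlength, fun a ha ↦ hsub a ?_⟩
    exact RelSeries.mem_snoc.mpr (.inl ha)

lemma exists_isSaturatedChain_mem_of_le_of_le {a b c : α} (hab : a ≤ b) (hbc : b ≤ c) :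
    ∃ s : LTSeries α, IsSaturatedChain s ∧ s.head = a ∧ s.last = c ∧ b ∈ s := by
  obtain ⟨l, -, hl_head, rfl, -⟩ := exists_isSaturatedChain_extension (RelSeries.singleton _ a) hab
  obtain ⟨s, hs, hs_head, hs_last, -, hsub⟩ := exists_isSaturatedChain_extension l hbc
  exact ⟨s, hs, hs_head.trans hl_head, hs_last, hsub _ l.last_mem⟩

lemma exists_isSaturatedChain_of_le_coheight [OrderTop α] {a : α} {n : ℕ}
    (h : n ≤ Order.coheight a) :
    ∃ s : LTSeries α, IsSaturatedChain s ∧ s.head = a ∧ s.last = ⊤ ∧ n ≤ s.length := by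
  obtain ⟨l, rfl, rfl⟩ := Order.exists_series_of_le_coheight a h
  obtain ⟨s, hs, hhead, hlast, hlength, -⟩ := exists_isSaturatedChain_extension l le_top
  exact ⟨s, hs, hhead, hlast, hlength⟩

end SaturatedChains

section Dimension

variable {R : Type*} [CommRing R]

instance wellFoundedLT_primeSpectrum [FiniteRingKrullDim R] :
    WellFoundedLT (PrimeSpectrum R) :=
  ⟨SetRel.IsWellFounded.of_finiteDimensional
    {(p, q) : PrimeSpectrum R × PrimeSpectrum R | p < q}⟩

instance wellFoundedGT_primeSpectrum [FiniteRingKrullDim R] :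
    WellFoundedGT (PrimeSpectrum R) :=
  ⟨SetRel.IsWellFounded.of_finiteDimensional
    (SetRel.inv {(p, q) : PrimeSpectrum R × PrimeSpectrum R | p < q})⟩

lemma ringKrullDim_quotient_asIdeal_eq_coheight (p : PrimeSpectrum R) :
    ringKrullDim (R ⧸ p.asIdeal) = Order.coheight p := by
  rw [ringKrullDim_quotient, Order.coheight_eq_krullDim_Ici]
  rfl

lemma ringKrullDim_quotient_eq_zero_iff {I : Ideal R} :
    ringKrullDim (R ⧸ I) = 0 ↔ I ≠ ⊤ ∧ ∀ p : Ideal R, p.IsPrime → I ≤ p → p.IsMaximal := by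
  rcases eq_or_ne I ⊤ with rfl | hI
  · have : Subsingleton (R ⧸ (⊤ : Ideal R)) := Ideal.Quotient.subsingleton_iff.mpr rfl
    simp [ringKrullDim_eq_bot_of_subsingleton]
  have : Nontrivial (R ⧸ I) := Ideal.Quotient.nontrivial_iff.mpr hI
  rw [← ringKrullDimZero_iff_ringKrullDim_eq_zero,
    Ideal.krullDimLE_zero_quotient_iff_forall_minimalPrimes_isMaximal, and_iff_right hI]
  refine ⟨fun h p hp hIp ↦ ?_, fun h p hp ↦ h p hp.1.1 hp.1.2⟩
  obtain ⟨q, hq, hqp⟩ := Ideal.exists_minimalPrimes_le hIp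
  exact (h q hq).eq_of_le hp.ne_top hqp ▸ h q hq

lemma le_of_moduleDim_lt_ringKrullDim_quotient {V P : Ideal R} [hP : P.IsPrime]
    (h : moduleDim R V < ringKrullDim (R ⧸ P)) : V ≤ P := by
  have hann : ¬ Module.annihilator R V ≤ P := fun hle ↦
    h.not_ge (ringKrullDim_le_of_surjective _ (Ideal.Quotient.factor_surjective hle))
  have hmul : Module.annihilator R V * V ≤ P := (Submodule.annihilator_mul V).trans_le bot_le
  exact (hP.mul_le.mp hmul).resolve_left hann

end Dimension

lemma liesOver_radical_map {R S : Type*} [CommRing R] [CommRing S] [Algebra R S] {m : Ideal R}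
    (hm : m.IsMaximal) (h : (m.map (algebraMap R S)).radical ≠ ⊤) :
    (m.map (algebraMap R S)).radical.LiesOver m :=
  ⟨hm.eq_of_le (Ideal.comap_ne_top _ h) (Ideal.map_le_iff_le_comap.mp Ideal.le_radical)⟩

section LocalRing

variable {R : Type*} [CommRing R] [IsLocalRing R]

lemma radical_eq_maximalIdeal_iff {I : Ideal R} :
    I.radical = maximalIdeal R ↔
      I ≠ ⊤ ∧ ∀ p : Ideal R, p.IsPrime → I ≤ p → p = maximalIdeal R := by
  constructor
  · refine fun h ↦ ⟨?_, fun p hp hIp ↦ ?_⟩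
    · rintro rfl
      exact (maximalIdeal.isMaximal R).ne_top (h.symm.trans (Ideal.radical_top R))
    · exact le_antisymm (le_maximalIdeal hp.ne_top) (h.ge.trans (hp.radical_le_iff.mpr hIp))
  · rintro ⟨hI, h⟩
    refine le_antisymm ?_ ?_
    · exact (maximalIdeal.isMaximal R).isPrime.radical_le_iff.mpr (le_maximalIdeal hI)
    · rw [Ideal.radical_eq_sInf]
      exact le_sInf fun p hp ↦ (h p hp.2 hp.1).ge

lemma isSOP_iff_radical_span_eq {t : ℕ} {x : Fin t → R} :
    IsSOP R x ↔ (Ideal.span (Set.range x)).radical = maximalIdeal R :=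
  and_iff_right_of_imp fun h i ↦ h.le (Ideal.le_radical (Ideal.subset_span ⟨i, rfl⟩))

lemma isMaximal_radical_map_adicCompletion [IsNoetherianRing R] :
    ((maximalIdeal R).map
      (algebraMap R (AdicCompletion (maximalIdeal R) R))).radical.IsMaximal := by
  rw [← AdicCompletion.maximalIdeal_eq_map, (maximalIdeal.isMaximal _).isPrime.radical]
  exact maximalIdeal.isMaximal _

end LocalRing

section CatenaryEquidimensional

variable {R : Type*} [CommRing R] [FiniteRingKrullDim R] [IsLocalRing R]

lemma exists_isSaturatedChain_of_mem_minimalPrimes (hequi : IsEquidimensionalRing R)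
    {q : PrimeSpectrum R} (hq : q.asIdeal ∈ minimalPrimes R) :
    ∃ s : LTSeries (PrimeSpectrum R), IsSaturatedChain s ∧ s.head = q ∧ s.last = closedPoint R ∧
      (s.length : WithBot ℕ∞) = ringKrullDim R := by
  have hcoheight : (Order.coheight q : WithBot ℕ∞) = ringKrullDim R := by
    rw [← ringKrullDim_quotient_asIdeal_eq_coheight, hequi _ hq]
  obtain ⟨n, hn⟩ := ENat.ne_top_iff_exists.mp (Order.coheight_lt_top q).ne
  obtain ⟨s, hs, hhead, hlast, hlength⟩ := exists_isSaturatedChain_of_le_coheight hn.le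
  refine ⟨s, hs, hhead, hlast, le_antisymm (Order.LTSeries.length_le_krullDim s) ?_⟩
  rw [← hcoheight, ← hn]
  exact_mod_cast hlength

lemma exists_ltSeries_mem_length_eq_ringKrullDim (hcat : IsCatenaryRing R)
    (hequi : IsEquidimensionalRing R) (p : PrimeSpectrum R) :
    ∃ c : LTSeries (PrimeSpectrum R),
      c.last = closedPoint R ∧ p ∈ c ∧ (c.length : WithBot ℕ∞) = ringKrullDim R := by
  obtain ⟨q, hq, hqp⟩ := Ideal.exists_minimalPrimes_le (I := ⊥) (J := p.asIdeal) bot_le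
  let q₀ : PrimeSpectrum R := ⟨q, hq.1.1⟩
  obtain ⟨s, hs, hs_head, hs_last, hs_length⟩ :=
    exists_isSaturatedChain_of_mem_minimalPrimes (q := q₀) hequi hq
  obtain ⟨c, hc, hc_head, hc_last, hpc⟩ :=
    exists_isSaturatedChain_mem_of_le_of_le (a := q₀) hqp (le_top : p ≤ ⊤)
  have hlength : c.length = s.length :=
    hcat q₀ ⊤ le_top c s hc_head hc_last hs_head hs_last hc hs
  exact ⟨c, hc_last, hpc, hlength ▸ hs_length⟩

variable {S : Type*} [CommRing S] [Algebra R S] [Algebra.HasGoingDown R S]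

lemma exists_isPrime_le_liesOver_of_moduleDim_lt (hcat : IsCatenaryRing R)
    (hequi : IsEquidimensionalRing R) {V : Ideal S} (hV : moduleDim S V < ringKrullDim R)
    (p : Ideal R) [hp : p.IsPrime] (Q : Ideal S) [Q.IsPrime] [hQ : Q.LiesOver (maximalIdeal R)] :
    ∃ P ≤ Q, P.IsPrime ∧ P.LiesOver p ∧ V ≤ P := by
  obtain ⟨c, hc_last, hpc, hc_length⟩ :=
    exists_ltSeries_mem_length_eq_ringKrullDim hcat hequi ⟨p, hp⟩
  have : Q.LiesOver c.last.asIdeal := by rwa [hc_last]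
  obtain ⟨L, hL_length, hL_last, hL_map⟩ := Ideal.exists_ltSeries_of_hasGoingDown c Q
  obtain ⟨P, hPL, hPp⟩ : ∃ P ∈ L, P.comap (algebraMap R S) = ⟨p, hp⟩ := by
    simpa only [← RelSeries.mem_toList, ← hL_map, List.mem_map] using hpc
  have hhead : V ≤ L.head.asIdeal := by
    refine le_of_moduleDim_lt_ringKrullDim_quotient (hV.trans_le ?_)
    rw [← hc_length, ← hL_length, ringKrullDim_quotient_asIdeal_eq_coheight]
    exact_mod_cast Order.length_le_coheight_head
  obtain ⟨i, rfl⟩ := hPL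
  refine ⟨(L i).asIdeal, ?_, (L i).isPrime, ⟨congrArg PrimeSpectrum.asIdeal hPp.symm⟩,
    hhead.trans (L.head_le i)⟩
  exact (L.monotone (Fin.le_last i)).trans hL_last.le

theorem sop_iff_sop_completion_mod_unmixed_general (hcat : IsCatenaryRing R)
    (hequi : IsEquidimensionalRing R)
    (hmax : ((maximalIdeal R).map (algebraMap R S)).radical.IsMaximal)
    {V : Ideal S} (hV : moduleDim S V < ringKrullDim R) (I : Ideal R) :
    I.radical = maximalIdeal R ↔ ringKrullDim (S ⧸ (I.map (algebraMap R S) ⊔ V)) = 0 := by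
  let n := ((maximalIdeal R).map (algebraMap R S)).radical
  have hn : n.IsPrime := hmax.isPrime
  have hover : n.LiesOver (maximalIdeal R) :=
    liesOver_radical_map (maximalIdeal.isMaximal R) hmax.ne_top
  have hlift (p : Ideal R) (hp : p.IsPrime) (hIp : I ≤ p) :
      ∃ P ≤ n, P.IsPrime ∧ P.LiesOver p ∧ I.map (algebraMap R S) ⊔ V ≤ P := by
    obtain ⟨P, hPn, hP, hPp, hVP⟩ := exists_isPrime_le_liesOver_of_moduleDim_lt hcat hequi hV p n
    exact ⟨P, hPn, hP, hPp, sup_le (Ideal.map_le_iff_le_comap.mpr (hIp.trans hPp.over.le)) hVP⟩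
  rw [radical_eq_maximalIdeal_iff, ringKrullDim_quotient_eq_zero_iff]
  constructor
  · rintro ⟨hI, hprimes⟩
    refine ⟨?_, fun P hP hIP ↦ ?_⟩
    · obtain ⟨P, -, hP, -, hIP⟩ := hlift (maximalIdeal R) inferInstance (le_maximalIdeal hI)
      exact ne_top_of_le_ne_top hP.ne_top hIP
    · have hPm : P.under R = maximalIdeal R :=
        hprimes _ inferInstance (Ideal.map_le_iff_le_comap.mp (le_sup_left.trans hIP))
      have hnP : n ≤ P := hP.radical_le_iff.mpr (Ideal.map_le_iff_le_comap.mpr hPm.ge)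
      exact hmax.eq_of_le hP.ne_top hnP ▸ hmax
  · rintro ⟨hIV, hprimes⟩
    refine ⟨?_, fun p hp hIp ↦ ?_⟩
    · rintro rfl
      exact hIV (by rw [Ideal.map_top, top_sup_eq])
    · obtain ⟨P, hPn, hP, hPp, hIP⟩ := hlift p hp hIp
      have hPn : P = n := (hprimes P hP hIP).eq_of_le hn.ne_top hPn
      rw [hPp.over, hPn, ← hover.over]

end CatenaryEquidimensional

/-- Let `(R, m)` be a catenary equidimensional Noetherian local ring of dimension `t`, let
`R̂` be its `m`-adic completion and `V = U_{R̂}(0)` the unmixed component of `R̂` (the largest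
ideal of `R̂` of dimension `< t`).  A sequence `x = x₁, …, x_t` of elements of `R` is a
system of parameters of `R` if and only if its image is a system of parameters of
`R̂/U_{R̂}(0)`, i.e. the image generates an ideal primary to the maximal ideal of
`R̂/U_{R̂}(0)`, which amounts to `dim R̂/((x)R̂ + V) = 0`. -/
theorem sop_iff_sop_completion_mod_unmixed
    {R : Type*} [CommRing R] [IsNoetherianRing R] [IsLocalRing R]
    {t : ℕ} (hdim : ringKrullDim R = t)
    (hcat : IsCatenaryRing R) (hequi : IsEquidimensionalRing R)
    (V : Ideal (AdicCompletion (maximalIdeal R) R))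
    (hVdim : moduleDim (AdicCompletion (maximalIdeal R) R) V < (t : WithBot ℕ∞))
    (hVmax : ∀ J : Ideal (AdicCompletion (maximalIdeal R) R),
      moduleDim (AdicCompletion (maximalIdeal R) R) J < (t : WithBot ℕ∞) → J ≤ V)
    (x : Fin t → R) :
    IsSOP R x ↔
      ringKrullDim ((AdicCompletion (maximalIdeal R) R) ⧸
        (Ideal.span (Set.range fun i =>
          algebraMap R (AdicCompletion (maximalIdeal R) R) (x i)) ⊔ V)) = 0 := by
  rw [isSOP_iff_radical_span_eq, sop_iff_sop_completion_mod_unmixed_general hcat hequi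
    isMaximal_radical_map_adicCompletion (hdim ▸ hVdim), Ideal.map_span, ← Set.range_comp,
    Function.comp_def]
end

section
/- Let (R, m) be a Noetherian local ring of dimension t and let x = x_1, ..., x_t and y = y_1, ..., y_t be two systems of parameters of R. Then the topologies on R defined by the families of ideals {(x_1^n, ..., x_t^n)^lim}_{n ≥ 1} and {(y_1^n, ..., y_t^n)^lim}_{n ≥ 1} are equivalent; that is, for each n ≥ 1 there exists m ≥ 1 with (y_1^m, ..., y_t^m)^lim ⊆ (x_1^n, ..., x_t^n)^lim, and symmetrically with the roles of x and y exchanged. -/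
/-!
The limit closure of `x` is the annihilator of the class of `1 / (x₁⋯x_t)` in top local cohomology,
and this class is a multiple of the one attached to `y` whenever `(y) ⊆ (x)`; so if moreover
`√(x) = √(y)`, then `(y)^lim ⊆ (x)^lim`. The theorem follows, as a high power of each `yᵢ` lies in
`(x₁^n, …, x_t^n)`.

The argument below is the determinantal form of this, with no local cohomology. If `A x = z`, then
`det A` maps `(x)` into `(z)` by Cramer's rule, and `det A` modulo `(z₁², …, z_t²)` depends only on
`x` and `z` after multiplication by `z₁⋯z_t`. Let `r (y₁⋯y_t)^k ∈ (y₁^{k+1}, …, y_t^{k+1})`, write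
`y = A x`, and write `x^N = C y^{k+1}` for some large `N`. Both `C · diag(y^k) · A` and
`diag(x^{N-1})` send `x` to `x^N`, and the determinant of the first multiplies `r` into `(x^N)`, so
that of the second does so too, up to enlarging `N`.
-/

open IsLocalRing

lemma span_range_update_zero_le {R n : Type*} [Semiring R] [DecidableEq n] (z : n → R) (i : n) :
    Ideal.span (Set.range (Function.update z i 0)) ≤ Ideal.span (Set.range z) := by
  rw [Ideal.span_le, Set.range_subset_iff]
  intro k
  obtain rfl | hk := eq_or_ne k i
  · simp
  · rw [Function.update_of_ne hk]
    exact Ideal.subset_span (Set.mem_range_self k)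

section Determinant

open Matrix

variable {R : Type*} [CommRing R] {n : Type*} [Fintype n]

lemma exists_mulVec_eq_iff_span_range_le {m : Type*} {x : n → R} {z : m → R} :
    (∃ A : Matrix m n R, A *ᵥ x = z) ↔ Ideal.span (Set.range z) ≤ Ideal.span (Set.range x) := by
  simp only [Ideal.span_le, Set.range_subset_iff, SetLike.mem_coe,
    Ideal.mem_span_range_iff_exists_fun]
  refine ⟨fun ⟨A, hA⟩ i => ⟨A i, congrFun hA i⟩, fun h => ?_⟩
  choose A hA using h
  exact ⟨of A, funext hA⟩

variable [DecidableEq n]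

lemma det_mul_mem_span_range_mulVec (A : Matrix n n R) (x : n → R) {a : R}
    (ha : a ∈ Ideal.span (Set.range x)) :
    A.det * a ∈ Ideal.span (Set.range (A *ᵥ x)) := by
  have cramer : A.adjugate *ᵥ (A *ᵥ x) = A.det • x := by
    rw [mulVec_mulVec, adjugate_mul, smul_mulVec, one_mulVec]
  have span_le : Ideal.span (Set.range (A.det • x)) ≤ Ideal.span (Set.range (A *ᵥ x)) :=
    exists_mulVec_eq_iff_span_range_le.1 ⟨_, cramer⟩
  obtain ⟨c, rfl⟩ := Ideal.mem_span_range_iff_exists_fun.1 ha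
  refine span_le (Ideal.mem_span_range_iff_exists_fun.2 ⟨c, ?_⟩)
  simp only [Pi.smul_apply, smul_eq_mul, Finset.mul_sum, mul_left_comm]

lemma det_smul_mem_span_range_mulVec_smul {M : Type*} [AddCommGroup M] [Module R M]
    {N : Submodule R M} (A : Matrix n n R) (x : n → R) {r : M}
    (hr : r ∈ Ideal.span (Set.range x) • N) :
    A.det • r ∈ Ideal.span (Set.range (A *ᵥ x)) • N := by
  refine Submodule.smul_induction_on hr (fun a ha s hs => ?_) fun s s' hs hs' => ?_
  · rw [smul_smul]
    exact Submodule.smul_mem_smul (det_mul_mem_span_range_mulVec A x ha) hs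
  · rw [smul_add]
    exact add_mem hs hs'

lemma det_mul_prod_mem_of_mulVec_eq_update_zero {A : Matrix n n R} {x z : n → R} {i : n}
    (hA : A *ᵥ x = Function.update z i 0) (hz : z i ∈ Ideal.span (Set.range x)) :
    A.det * ∏ k, z k ∈ Ideal.span (Set.range fun k => z k ^ 2) := by
  -- The rows `k ≠ i` of `A` are scaled by `z k`; Cramer's rule absorbs the remaining factor `z i`.
  let D : Matrix n n R := diagonal (Function.update z i 1)
  have hdet : (D * A).det * z i = A.det * ∏ k, z k := by
    rw [det_mul, det_diagonal, Finset.prod_update_of_mem (Finset.mem_univ i), one_mul,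
      Finset.sdiff_singleton_eq_erase, ← Finset.prod_erase_mul _ z (Finset.mem_univ i)]
    ring
  have hvec : (D * A) *ᵥ x = Function.update (fun k => z k ^ 2) i 0 := by
    rw [← mulVec_mulVec, hA]
    ext k
    rw [mulVec_diagonal]
    obtain rfl | hk := eq_or_ne k i
    · simp
    · simp [hk, sq]
  have hmem := det_mul_mem_span_range_mulVec (D * A) x hz
  rw [hdet, hvec] at hmem
  exact span_range_update_zero_le _ i hmem

lemma updateRow_mulVec_eq_update (A : Matrix n n R) (x b : n → R) (i : n) :
    A.updateRow i b *ᵥ x = Function.update (A *ᵥ x) i (b ⬝ᵥ x) := by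
  ext k
  obtain rfl | hk := eq_or_ne k i
  · simp [mulVec]
  · simp [mulVec, hk]

lemma det_updateRow_mul_prod_smodEq {A : Matrix n n R} {x z b : n → R} {i : n}
    (hA : A *ᵥ x = z) (hb : b ⬝ᵥ x = z i) :
    (A.updateRow i b).det * ∏ k, z k ≡ A.det * ∏ k, z k
      [SMOD Ideal.span (Set.range fun k => z k ^ 2)] := by
  have hdiff : A.updateRow i (b - A i) *ᵥ x = Function.update z i 0 := by
    rw [updateRow_mulVec_eq_update, sub_dotProduct, hb, hA, ← congrFun hA i]
    exact congrArg _ (sub_self _)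
  have hdet : (A.updateRow i b).det = (A.updateRow i (b - A i)).det + A.det := by
    simpa only [sub_add_cancel, updateRow_eq_self] using det_updateRow_add A i (b - A i) (A i)
  rw [SModEq.sub_mem, ← sub_mul, hdet, add_sub_cancel_right]
  exact det_mul_prod_mem_of_mulVec_eq_update_zero hdiff
    (Ideal.mem_span_range_iff_exists_fun.2 ⟨b, hb⟩)

lemma det_mul_prod_smodEq_of_mulVec_eq {A B : Matrix n n R} {x z : n → R}
    (hA : A *ᵥ x = z) (hB : B *ᵥ x = z) :
    A.det * ∏ k, z k ≡ B.det * ∏ k, z k [SMOD Ideal.span (Set.range fun k => z k ^ 2)] := by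
  let mix (S : Finset n) : Matrix n n R := of (S.piecewise A B)
  have mix_insert (i : n) (S : Finset n) : mix (insert i S) = (mix S).updateRow i (A i) :=
    Finset.piecewise_insert S A B i
  have mix_empty : mix ∅ = B := Finset.piecewise_empty A B
  have mix_univ : mix Finset.univ = A := Finset.piecewise_univ A B
  have hrow (i : n) : A i ⬝ᵥ x = z i := congrFun hA i
  have mix_mulVec (S : Finset n) : mix S *ᵥ x = z := by
    induction S using Finset.induction_on with
    | empty => rw [mix_empty, hB]
    | insert i S _ ih =>
      rw [mix_insert, updateRow_mulVec_eq_update, ih, hrow, Function.update_eq_self]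
  have mix_smodEq (S : Finset n) : (mix S).det * ∏ k, z k ≡ B.det * ∏ k, z k
      [SMOD Ideal.span (Set.range fun k => z k ^ 2)] := by
    induction S using Finset.induction_on with
    | empty => rw [mix_empty]
    | insert i S _ ih =>
      rw [mix_insert]
      exact (det_updateRow_mul_prod_smodEq (mix_mulVec S) (hrow i)).trans ih
  exact mix_univ ▸ mix_smodEq Finset.univ

end Determinant

section Radical

variable {R : Type*} [CommSemiring R] {ι : Type*}

lemma radical_span_range_pow (x : ι → R) {n : ℕ} (hn : n ≠ 0) :
    (Ideal.span (Set.range fun i => x i ^ n)).radical = (Ideal.span (Set.range x)).radical := by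
  apply le_antisymm <;> rw [Ideal.radical_le_radical_iff, Ideal.span_le, Set.range_subset_iff]
  · exact fun i => Ideal.le_radical
      (Ideal.pow_mem_of_mem _ (Ideal.subset_span (Set.mem_range_self i)) n hn.pos)
  · exact fun i => ⟨n, Ideal.subset_span (Set.mem_range_self i)⟩

lemma exists_span_range_pow_le_of_le_radical [Finite ι] {x : ι → R} {I : Ideal R}
    (h : Ideal.span (Set.range x) ≤ I.radical) :
    ∃ n : ℕ, Ideal.span (Set.range fun i => x i ^ (n + 1)) ≤ I := by
  obtain ⟨n, hn⟩ :=
    Ideal.exists_pow_le_of_le_radical_of_fg h (Submodule.fg_span (Set.finite_range x))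
  refine ⟨n, Ideal.span_le.2 (Set.range_subset_iff.2 fun i => ?_)⟩
  exact hn (Ideal.pow_le_pow_right n.le_succ
    (Ideal.pow_mem_pow (Ideal.subset_span (Set.mem_range_self i)) _))

end Radical

section LimitClosure

open Matrix

variable {R : Type*} [CommRing R] {M : Type*} [AddCommGroup M] [Module R M] {t : ℕ}
  {x y : Fin t → R}

lemma mem_limitClosure_of_det_smul_mem {N : ℕ} {A : Matrix (Fin t) (Fin t) R}
    (hA : A *ᵥ x = fun i => x i ^ (N + 1)) {r : M}
    (hr : A.det • r ∈ Ideal.span (Set.range fun i => x i ^ (N + 1)) • (⊤ : Submodule R M)) :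
    r ∈ limitClosure (M := M) x := by
  set z : Fin t → R := fun i => x i ^ (N + 1) with hz
  let J : Ideal R := Ideal.span (Set.range fun i => z i ^ 2)
  have hdiag : diagonal (fun i => x i ^ N) *ᵥ x = z := by
    ext i
    rw [mulVec_diagonal, ← pow_succ]
  have hdet : (∏ i, x i) ^ (2 * N + 1) - A.det * ∏ i, z i ∈ J := by
    have h := SModEq.sub_mem.1 (det_mul_prod_smodEq_of_mulVec_eq hdiag hA)
    have hpow : (∏ i, x i ^ N) * ∏ i, z i = (∏ i, x i) ^ (2 * N + 1) := by
      rw [Finset.prod_pow, Finset.prod_pow]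
      ring
    rwa [det_diagonal, hpow] at h
  have hsq : (A.det * ∏ i, z i) • r ∈ J • (⊤ : Submodule R M) := by
    have h := det_smul_mem_span_range_mulVec_smul (diagonal z) z hr
    have hzz : diagonal z *ᵥ z = fun i => z i ^ 2 := by
      ext i
      rw [mulVec_diagonal, sq]
    rwa [hzz, det_diagonal, smul_smul, mul_comm] at h
  have hmem : (∏ i, x i) ^ (2 * N + 1) • r ∈ J • (⊤ : Submodule R M) := by
    rw [← sub_add_cancel ((∏ i, x i) ^ (2 * N + 1)) (A.det * ∏ i, z i), add_smul]
    exact add_mem (Submodule.smul_mem_smul hdet Submodule.mem_top) hsq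
  refine Submodule.mem_iSup_of_mem (2 * N) ?_
  rw [Submodule.mem_comap, LinearMap.lsmul_apply]
  simpa only [J, hz, ← pow_mul, add_mul, one_mul, mul_comm N 2] using hmem

lemma limitClosure_le_limitClosure_of_span_le
    (hyx : Ideal.span (Set.range y) ≤ Ideal.span (Set.range x))
    (hxy : Ideal.span (Set.range x) ≤ (Ideal.span (Set.range y)).radical) :
    limitClosure (M := M) y ≤ limitClosure (M := M) x := by
  refine iSup_le fun k r hr => ?_
  rw [Submodule.mem_comap, LinearMap.lsmul_apply] at hr
  rw [← radical_span_range_pow y (k + 1).succ_ne_zero] at hxy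
  obtain ⟨N, hN⟩ := exists_span_range_pow_le_of_le_radical hxy
  obtain ⟨A, hA⟩ := exists_mulVec_eq_iff_span_range_le.2 hyx
  obtain ⟨C, hC⟩ := exists_mulVec_eq_iff_span_range_le.2 hN
  let D : Matrix (Fin t) (Fin t) R := diagonal fun i => y i ^ (k + 1)
  have hD : D *ᵥ y = fun i => y i ^ (k + 2) := by
    ext i
    rw [mulVec_diagonal, ← pow_succ]
  have hDr : D.det • r ∈ Ideal.span (Set.range fun i => y i ^ (k + 2)) • (⊤ : Submodule R M) := by
    rwa [det_diagonal, Finset.prod_pow]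
  have hCDr := det_smul_mem_span_range_mulVec_smul C _ hDr
  refine mem_limitClosure_of_det_smul_mem (A := C * D * A) (N := N) ?_ ?_
  · rw [← mulVec_mulVec, hA, ← mulVec_mulVec, hD, hC]
  · rw [det_mul, det_mul, mul_comm, mul_smul, mul_smul, ← hC]
    exact Submodule.smul_mem _ _ hCDr

variable (M) in
lemma exists_limitClosure_pow_le_limitClosure_pow
    (h : (Ideal.span (Set.range x)).radical = (Ideal.span (Set.range y)).radical) (n : ℕ) :
    ∃ m : ℕ, limitClosure (M := M) (fun i => y i ^ (m + 1)) ≤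
      limitClosure (M := M) (fun i => x i ^ (n + 1)) := by
  have rad_eq (m : ℕ) : (Ideal.span (Set.range fun i => x i ^ (n + 1))).radical =
      (Ideal.span (Set.range fun i => y i ^ (m + 1))).radical := by
    rw [radical_span_range_pow x n.succ_ne_zero, h, radical_span_range_pow y m.succ_ne_zero]
  have y_le : Ideal.span (Set.range y) ≤
      (Ideal.span (Set.range fun i => x i ^ (n + 1))).radical := by
    rw [radical_span_range_pow x n.succ_ne_zero, h]
    exact Ideal.le_radical
  obtain ⟨m, hm⟩ := exists_span_range_pow_le_of_le_radical y_le
  exact ⟨m, limitClosure_le_limitClosure_of_span_le hm (rad_eq m ▸ Ideal.le_radical)⟩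

variable (M) in
theorem limitClosure_topologies_equivalent_general
    (h : (Ideal.span (Set.range x)).radical = (Ideal.span (Set.range y)).radical) :
    (∀ n : ℕ, ∃ m : ℕ,
      limitClosure (M := M) (fun i => y i ^ (m + 1)) ≤
        limitClosure (M := M) (fun i => x i ^ (n + 1))) ∧
    (∀ n : ℕ, ∃ m : ℕ,
      limitClosure (M := M) (fun i => x i ^ (m + 1)) ≤
        limitClosure (M := M) (fun i => y i ^ (n + 1))) :=
  ⟨exists_limitClosure_pow_le_limitClosure_pow M h,
    exists_limitClosure_pow_le_limitClosure_pow M h.symm⟩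

end LimitClosure

/-- For any two systems of parameters `x` and `y` of a Noetherian local ring `R` of
dimension `t`, the topologies defined by `{(x₁^n, …, x_t^n)^lim}_{n ≥ 1}` and
`{(y₁^n, …, y_t^n)^lim}_{n ≥ 1}` are equivalent: each member of one family contains a
member of the other. -/
theorem limitClosure_topologies_equivalent
    {R : Type*} [CommRing R] [IsNoetherianRing R] [IsLocalRing R]
    {t : ℕ} (hdim : ringKrullDim R = t)
    (x y : Fin t → R) (hx : IsSOP R x) (hy : IsSOP R y) :
    (∀ n : ℕ, ∃ m : ℕ,
      limitClosure (M := R) (fun i => y i ^ (m + 1)) ≤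
        limitClosure (M := R) (fun i => x i ^ (n + 1))) ∧
    (∀ n : ℕ, ∃ m : ℕ,
      limitClosure (M := R) (fun i => x i ^ (m + 1)) ≤
        limitClosure (M := R) (fun i => y i ^ (n + 1))) :=
  limitClosure_topologies_equivalent_general R (hx.2.trans hy.2.symm)
end

section
/- Let (R, m) be an equidimensional Noetherian local ring of dimension two which is an image of a Cohen-Macaulay local ring, and let x, y be a system of parameters of R. Then (x, y)^lim is contained in the integral closure of the ideal (x, y). -/
/-!
Every minimal prime `p` of `R` is the annihilator of a finite `R`-module on which `x, y` is a
regular sequence. Indeed, write `R` as a quotient of the Cohen–Macaulay ring `A` and let `P` be the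
preimage of `p`, so that `dim A/P = 2`. Starting from `A`, divide out regular elements of `P` until
`P` is associated to the resulting module `M`. Then `M` has depth two, and the submodule
`N = (0 :_M P)` inherits depth two from `M` and has annihilator `P`; on `N`, every system of
parameters of `R` is regular.

Limit closures are functorial, and a regular sequence of length two has the trivial limit closure
`(x, y)N`, so `r ∈ (x, y)^lim` implies `rN ⊆ (x, y)N`. The determinant trick now gives an equation
of integrality for `r` over `(x, y)` that holds modulo `p`. The product of these equations over all
minimal primes is nilpotent at `r`, hence a power of it is an equation of integrality in `R`.
-/

open IsLocalRing

/-- An element `r` is integral over an ideal `I` if it satisfies an equation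
`r^n + a₁ r^{n-1} + ⋯ + a_n = 0` with `aᵢ ∈ Iⁱ`. -/
def IsIntegralOverIdeal {R : Type*} [CommRing R] (I : Ideal R) (r : R) : Prop :=
  ∃ n : ℕ, 0 < n ∧ ∃ a : ℕ → R, (∀ i, 1 ≤ i → i ≤ n → a i ∈ I ^ i) ∧
    r ^ n + ∑ i ∈ Finset.Icc 1 n, a i * r ^ (n - i) = 0

universe u

section Depth

open RingTheory.Sequence CategoryTheory Abelian Pointwise

theorem ringKrullDim_quotient_succ_le_of_lt {A : Type*} [CommRing A] {P Q : Ideal A}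
    [P.IsPrime] (h : P < Q) :
    ringKrullDim (A ⧸ Q) + 1 ≤ ringKrullDim (A ⧸ P) := by
  obtain ⟨hle, q, hqQ, hqP⟩ := SetLike.lt_iff_le_and_exists.mp h
  refine ringKrullDim_succ_le_of_surjective (Ideal.Quotient.factor hle)
    (Ideal.Quotient.factor_surjective hle) (r := Ideal.Quotient.mk P q) ?_ ?_
  · rwa [mem_nonZeroDivisors_iff_ne_zero, Ne, Ideal.Quotient.eq_zero_iff_mem]
  · rwa [Ideal.Quotient.factor_mk, Ideal.Quotient.eq_zero_iff_mem]

section Module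

variable {A : Type*} [CommRing A] {M : Type*} [AddCommGroup M] [Module A M]

theorem ringKrullDim_quotient_le_supportDim [Module.Finite A M] {P : Ideal A} [hPp : P.IsPrime]
    (hP : ⟨P, hPp⟩ ∈ Module.support A M) :
    ringKrullDim (A ⧸ P) ≤ Module.supportDim A M := by
  rw [Module.supportDim_eq_ringKrullDim_quotient_annihilator]
  have hle := Module.annihilator_le_of_mem_support hP
  exact ringKrullDim_le_of_surjective (Ideal.Quotient.factor hle)
    (Ideal.Quotient.factor_surjective hle)

theorem mem_torsionBySet_of_smul_mem {x : A} (hx : IsSMulRegular M x) {s : Set A}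
    {e : M} (he : x • e ∈ Submodule.torsionBySet A M s) : e ∈ Submodule.torsionBySet A M s := by
  rw [Submodule.mem_torsionBySet_iff] at he ⊢
  exact fun a => hx.right_eq_zero_of_smul (by rw [smul_comm, he a])

theorem annihilator_torsionBySet_of_isAssociatedPrime [IsNoetherianRing A] {P : Ideal A}
    (hP : IsAssociatedPrime P M) : Module.annihilator A (Submodule.torsionBySet A M P) = P := by
  obtain ⟨-, c, hc⟩ := isAssociatedPrime_iff.mp hP
  have hmem (a : A) : a ∈ P ↔ a • c = 0 := by
    rw [hc, Submodule.mem_colon_singleton, Submodule.mem_bot]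
  have hcP : c ∈ Submodule.torsionBySet A M P :=
    (Submodule.mem_torsionBySet_iff _ _).mpr fun a => (hmem a).mp a.2
  refine le_antisymm (fun a ha => ?_) fun a ha => ?_
  · exact (hmem a).mpr (congrArg Subtype.val (Module.mem_annihilator.mp ha ⟨c, hcP⟩))
  · exact Module.mem_annihilator.mpr fun e =>
      Subtype.ext ((Submodule.mem_torsionBySet_iff _ _).mp e.2 ⟨a, ha⟩)

theorem nontrivial_torsionBySet_of_isAssociatedPrime [IsNoetherianRing A] {P : Ideal A}
    (hP : IsAssociatedPrime P M) : Nontrivial (Submodule.torsionBySet A M P) := by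
  rw [← not_subsingleton_iff_nontrivial, ← Module.annihilator_eq_top_iff (R := A),
    annihilator_torsionBySet_of_isAssociatedPrime hP]
  exact hP.isPrime.ne_top

end Module

/-- The module `M` over the local ring `A` has depth at least `n`, in the sense that there is an
`M`-regular sequence of length `n`; over a local ring its members automatically lie in the maximal
ideal. -/
def HasDepthGE (A : Type*) [CommRing A] (n : ℕ) (M : Type*) [AddCommGroup M] [Module A M] : Prop :=
  ∃ rs : List A, rs.length = n ∧ IsRegular M rs

variable {A : Type*} [CommRing A] [IsLocalRing A]

theorem mem_maximalIdeal_of_isRegular_s17 {M : Type*} [AddCommGroup M] [Module A M] {rs : List A}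
    (h : IsRegular M rs) {r : A} (hr : r ∈ rs) : r ∈ maximalIdeal A := by
  refine IsLocalRing.le_maximalIdeal (J := Ideal.ofList rs) (fun htop => h.top_ne_smul ?_)
    (Ideal.subset_span hr)
  rw [htop, Submodule.top_smul]

variable [IsNoetherianRing A]

-- The submodule of elements killed by `P` meets `x • M` in its own multiple by `x`, so by Nakayama
-- it has an element outside `x • M`, whose class is killed by `P` and by `x`.
theorem exists_isAssociatedPrime_quotSMulTop_lt {M : Type*} [AddCommGroup M] [Module A M]
    [Module.Finite A M] {P : Ideal A} (hP : IsAssociatedPrime P M) {x : A}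
    (hx : x ∈ maximalIdeal A) (hreg : IsSMulRegular M x) :
    ∃ Q : Ideal A, IsAssociatedPrime Q (QuotSMulTop x M) ∧ P < Q := by
  let N := Submodule.torsionBySet A M P
  have : Nontrivial N := nontrivial_torsionBySet_of_isAssociatedPrime hP
  obtain ⟨e, heN, hex⟩ : ∃ e ∈ N, e ∉ x • (⊤ : Submodule A M) := by
    by_contra! hcon
    refine (Submodule.nontrivial_iff_ne_bot.mp this)
      (Submodule.eq_bot_of_le_smul_of_le_jacobson_bot (maximalIdeal A) N
        (IsNoetherian.noetherian N) (fun e he => ?_) (IsLocalRing.maximalIdeal_le_jacobson _))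
    obtain ⟨e', -, rfl⟩ := (Submodule.mem_smul_pointwise_iff_exists _ _ _).mp (hcon e he)
    exact Submodule.smul_mem_smul hx (mem_torsionBySet_of_smul_mem hreg he)
  obtain ⟨Q, hQ, hle⟩ := exists_le_isAssociatedPrime_of_isNoetherianRing A
    (Submodule.Quotient.mk e : QuotSMulTop x M) (by rwa [Ne, Submodule.Quotient.mk_eq_zero])
  have hmem {a : A} (ha : a • e ∈ x • (⊤ : Submodule A M)) : a ∈ Q :=
    hle (by rwa [Submodule.mem_colon_singleton, ← Submodule.Quotient.mk_smul, Submodule.mem_bot,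
      Submodule.Quotient.mk_eq_zero])
  refine ⟨Q, hQ, SetLike.lt_iff_le_and_exists.mpr ⟨fun a ha => hmem ?_, x,
    hmem (Submodule.smul_mem_pointwise_smul _ _ _ trivial), fun hxP => ?_⟩⟩
  · rw [(Submodule.mem_torsionBySet_iff _ _).mp heN ⟨a, ha⟩]
    exact zero_mem _
  · have : x • e = 0 := (Submodule.mem_torsionBySet_iff _ _).mp heN ⟨x, hxP⟩
    rw [hreg.right_eq_zero_of_smul this] at hex
    exact hex (zero_mem _)

theorem HasDepthGE.le_ringKrullDim_quotient {n : ℕ} {M : Type*} [AddCommGroup M] [Module A M]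
    [Module.Finite A M] (h : HasDepthGE A n M) {P : Ideal A} (hP : IsAssociatedPrime P M) :
    (n : WithBot ℕ∞) ≤ ringKrullDim (A ⧸ P) := by
  obtain ⟨rs, rfl, hrs⟩ := h
  induction rs generalizing M P with
  | nil =>
    have := Ideal.Quotient.nontrivial_iff.mpr hP.isPrime.ne_top
    simpa using ringKrullDim_nonneg_of_nontrivial
  | cons x rs ih =>
    have hx := mem_maximalIdeal_of_isRegular_s17 hrs List.mem_cons_self
    rw [isRegular_cons_iff] at hrs
    obtain ⟨Q, hQ, hlt⟩ := exists_isAssociatedPrime_quotSMulTop_lt hP hx hrs.1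
    have := hP.isPrime
    calc ((rs.length + 1 : ℕ) : WithBot ℕ∞) = rs.length + 1 := by push_cast; rfl
      _ ≤ ringKrullDim (A ⧸ Q) + 1 := by gcongr; exact ih hQ hrs.2
      _ ≤ ringKrullDim (A ⧸ P) := ringKrullDim_quotient_succ_le_of_lt hlt

theorem HasDepthGE.isSMulRegular {n : ℕ} {M : Type*} [AddCommGroup M] [Module A M]
    [Module.Finite A M] (h : HasDepthGE A n M) {x : A}
    (hx : Module.supportDim A (QuotSMulTop x M) < n) : IsSMulRegular M x := by
  by_contra hreg
  obtain ⟨P, hP, hxP⟩ : ∃ P ∈ associatedPrimes A M, x ∈ P := by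
    have : x ∈ ⋃ P ∈ associatedPrimes A M, (P : Set A) := by
      rw [biUnion_associatedPrimes_eq_compl_regular]
      exact hreg
    simpa using this
  have hsupp : ⟨P, hP.isPrime⟩ ∈ Module.support A (QuotSMulTop x M) := by
    rw [Module.support_quotSMulTop, Set.mem_inter_iff, Module.mem_support_iff_of_finite,
      PrimeSpectrum.mem_zeroLocus, Set.singleton_subset_iff, ← Submodule.annihilator_top]
    exact ⟨hP.annihilator_le, hxP⟩
  have := hP.isPrime
  exact hx.not_ge ((h.le_ringKrullDim_quotient hP).trans
    (ringKrullDim_quotient_le_supportDim hsupp))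

theorem supportDim_le_length {M : Type*} [AddCommGroup M] [Module A M]
    [Module.Finite A M] {rs : List A} (hrs : ∀ r ∈ rs, r ∈ maximalIdeal A)
    (hsupp : Module.support A M ∩ PrimeSpectrum.zeroLocus (Ideal.ofList rs) ⊆ {closedPoint A}) :
    Module.supportDim A M ≤ rs.length := by
  induction rs generalizing M with
  | nil =>
    have : Subsingleton (Module.support A M) :=
      Set.subsingleton_coe _ |>.mpr (Set.subsingleton_singleton.anti (by simpa using hsupp))
    exact_mod_cast Order.krullDim_nonpos_of_subsingleton
  | cons x rs ih =>
    have hx := hrs x List.mem_cons_self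
    have := ih (M := QuotSMulTop x M) (fun r hr => hrs r (List.mem_cons_of_mem _ hr)) (by
      rwa [Ideal.ofList_cons, PrimeSpectrum.zeroLocus_sup, PrimeSpectrum.zeroLocus_span,
        ← Set.inter_assoc, ← Module.support_quotSMulTop] at hsupp)
    calc Module.supportDim A M ≤ Module.supportDim A (QuotSMulTop x M) + 1 :=
          Module.supportDim_le_supportDim_quotSMulTop_succ hx
      _ ≤ rs.length + 1 := by gcongr
      _ = ((rs.length + 1 : ℕ) : WithBot ℕ∞) := by push_cast; rfl

theorem HasDepthGE.torsionBySet_two {M : Type*} [AddCommGroup M] [Module A M] [Module.Finite A M]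
    (h : HasDepthGE A 2 M) (s : Set A) [Nontrivial (Submodule.torsionBySet A M s)] :
    HasDepthGE A 2 (Submodule.torsionBySet A M s) := by
  obtain ⟨rs, hlen, hrs⟩ := h
  obtain ⟨u, v, rfl⟩ := List.length_eq_two.mp hlen
  refine ⟨[u, v], rfl, IsRegular.of_isWeaklyRegular_of_mem_maximalIdeal _
    (fun _ => mem_maximalIdeal_of_isRegular_s17 hrs) ?_⟩
  rw [isRegular_cons_iff, isRegular_cons_iff] at hrs
  obtain ⟨hu, hv, -⟩ := hrs
  rw [isWeaklyRegular_cons_iff, isWeaklyRegular_singleton_iff]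
  refine ⟨hu.submodule _ _, (isSMulRegular_quotient_iff_mem_of_smul_mem _ _).mpr fun e he => ?_⟩
  obtain ⟨e', -, he'⟩ := (Submodule.mem_smul_pointwise_iff_exists _ _ _).mp he
  obtain ⟨w, -, hw⟩ : (e : M) ∈ u • (⊤ : Submodule A M) := by
    refine mem_of_isSMulRegular_quotient_of_smul_mem hv ?_
    rw [← Submodule.coe_smul, ← he']
    exact Submodule.smul_mem_pointwise_smul _ _ _ trivial
  have hwN : w ∈ Submodule.torsionBySet A M s :=
    mem_torsionBySet_of_smul_mem hu (by simpa [← hw] using e.2)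
  exact (Submodule.mem_smul_pointwise_iff_exists _ _ _).mpr ⟨⟨w, hwN⟩, trivial, Subtype.ext hw⟩

theorem HasDepthGE.exists_mem_isSMulRegular {n : ℕ} {M : Type*} [AddCommGroup M] [Module A M]
    [Module.Finite A M] (h : HasDepthGE A n M) (hdim : Module.supportDim A M ≤ n) {P : Ideal A}
    [hPp : P.IsPrime] (hP : ⟨P, hPp⟩ ∈ Module.support A M) (hPM : ¬IsAssociatedPrime P M) :
    ∃ z ∈ P, IsSMulRegular M z := by
  by_contra! hcon
  obtain ⟨Q, hQ, hle⟩ : ∃ Q ∈ associatedPrimes A M, P ≤ Q := by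
    refine (P.subset_union_prime_finite (associatedPrimes.finite A M) (f := id) 0 0
      fun _ h _ _ => h.1).mp ?_
    simp_rw [id, biUnion_associatedPrimes_eq_compl_regular]
    exact hcon
  have hlt : P < Q := hle.lt_of_ne (by rintro rfl; exact hPM hQ)
  have : (n : WithBot ℕ∞) + 1 ≤ n :=
    calc (n : WithBot ℕ∞) + 1 ≤ ringKrullDim (A ⧸ Q) + 1 := by
          gcongr; exact h.le_ringKrullDim_quotient hQ
      _ ≤ ringKrullDim (A ⧸ P) := ringKrullDim_quotient_succ_le_of_lt hlt
      _ ≤ Module.supportDim A M := ringKrullDim_quotient_le_supportDim hP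
      _ ≤ n := hdim
  norm_cast at this
  omega

section Rees

variable {A : Type u} [CommRing A] [IsLocalRing A] [IsNoetherianRing A]
  {M : Type u} [AddCommGroup M] [Module A M] [Module.Finite A M]

-- By the Rees theorem depth is detected by the vanishing of `Ext` out of the residue field, so any
-- regular element, not only the first one of a given sequence, lowers it by at most one.
theorem HasDepthGE.quotSMulTop {n : ℕ} (h : HasDepthGE A (n + 1) M) {z : A}
    (hz : z ∈ maximalIdeal A) (hreg : IsSMulRegular M z) : HasDepthGE A n (QuotSMulTop z M) := by
  obtain ⟨rs, hlen, hrs⟩ := h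
  have : Nontrivial M := hrs.nontrivial
  have : Nontrivial (QuotSMulTop z M) := nontrivial_quotSMulTop_of_mem_maximalIdeal _ hz
  have smul_lt (N : Type u) [AddCommGroup N] [Module A N] [Module.Finite A N] [Nontrivial N] :
      maximalIdeal A • (⊤ : Submodule A N) < ⊤ :=
    (Submodule.top_ne_ideal_smul_of_le_jacobson_annihilator
      (IsLocalRing.maximalIdeal_le_jacobson _)).symm.lt_top
  let k : ModuleCat.{u} A := ModuleCat.of A (A ⧸ maximalIdeal A)
  have hk : Module.support A k = PrimeSpectrum.zeroLocus (maximalIdeal A) := by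
    rw [Module.support_eq_zeroLocus, Ideal.annihilator_quotient]
  have h_ext := ModuleCat.subsingleton_ext_of_exists_isRegular (maximalIdeal A) k hk.subset
    (ModuleCat.of A M) (smul_lt M) rs (fun _ => mem_maximalIdeal_of_isRegular_s17 hrs) hrs
  obtain ⟨rs', hlen', -, hrs'⟩ : ∃ rs' : List A, rs'.length = n ∧ (∀ r ∈ rs', r ∈ maximalIdeal A) ∧
      IsRegular (QuotSMulTop z M) rs' := by
    refine ModuleCat.exists_isRegular_of_exists_subsingleton_ext (maximalIdeal A) n
      (ModuleCat.of A (QuotSMulTop z M)) (smul_lt _) k hk fun i hi => ?_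
    have hzero := AddCommGrpCat.isZero_of_iff_subsingleton.mpr (h_ext i (by omega))
    have hzero_succ := AddCommGrpCat.isZero_of_iff_subsingleton.mpr (h_ext (i + 1) (by omega))
    exact AddCommGrpCat.subsingleton_of_isZero <| ShortComplex.Exact.isZero_of_both_zeros
      ((Ext.covariant_sequence_exact₃' k
        (IsSMulRegular.smulShortComplex_shortExact (M := ModuleCat.of A M) hreg)) i (i + 1) rfl)
      (hzero.eq_zero_of_src _) (hzero_succ.eq_zero_of_tgt _)
  exact ⟨rs', hlen', hrs'⟩

theorem HasDepthGE.isWeaklyRegular {rs : List A} (h : HasDepthGE A rs.length M)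
    (hrs : ∀ r ∈ rs, r ∈ maximalIdeal A)
    (hsupp : Module.support A M ∩ PrimeSpectrum.zeroLocus (Ideal.ofList rs) ⊆ {closedPoint A}) :
    IsWeaklyRegular M rs := by
  induction rs generalizing M with
  | nil => exact IsWeaklyRegular.nil A M
  | cons x rs ih =>
    rw [List.forall_mem_cons] at hrs
    have hsupp' : Module.support A (QuotSMulTop x M) ∩ PrimeSpectrum.zeroLocus (Ideal.ofList rs) ⊆
        {closedPoint A} := by
      rwa [Ideal.ofList_cons, PrimeSpectrum.zeroLocus_sup, PrimeSpectrum.zeroLocus_span,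
        ← Set.inter_assoc, ← Module.support_quotSMulTop] at hsupp
    have hx : IsSMulRegular M x := h.isSMulRegular <|
      (supportDim_le_length hrs.2 hsupp').trans_lt (by rw [List.length_cons]; norm_cast; omega)
    exact (isWeaklyRegular_cons_iff M x rs).mpr ⟨hx, ih (h.quotSMulTop hrs.1 hx) hrs.2 hsupp'⟩

theorem HasDepthGE.exists_isAssociatedPrime {n d : ℕ} (h : HasDepthGE A n M)
    (hdim : Module.supportDim A M ≤ n) {P : Ideal A} [hPp : P.IsPrime]
    (hP : ⟨P, hPp⟩ ∈ Module.support A M) (hd : ringKrullDim (A ⧸ P) = d) :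
    ∃ (N : Type u) (_ : AddCommGroup N) (_ : Module A N),
      Module.Finite A N ∧ HasDepthGE A d N ∧ IsAssociatedPrime P N := by
  induction n using Nat.strong_induction_on generalizing M with
  | _ n ih =>
    by_cases hPM : IsAssociatedPrime P M
    · have hnd : n = d := le_antisymm
        (by exact_mod_cast hd ▸ h.le_ringKrullDim_quotient hPM)
        (by exact_mod_cast hd ▸ (ringKrullDim_quotient_le_supportDim hP).trans hdim)
      exact ⟨M, _, _, inferInstance, hnd ▸ h, hPM⟩
    obtain ⟨z, hzP, hz⟩ := h.exists_mem_isSMulRegular hdim hP hPM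
    have hzm : z ∈ maximalIdeal A := IsLocalRing.le_maximalIdeal hPp.ne_top hzP
    have hP' : ⟨P, hPp⟩ ∈ Module.support A (QuotSMulTop z M) := by
      rw [Module.support_quotSMulTop]
      exact ⟨hP, by simpa using hzP⟩
    rw [← Module.supportDim_quotSMulTop_succ_eq_supportDim hz hzm] at hdim
    cases n with
    | zero =>
      have hbot := (ENat.WithBot.add_one_le_zero_iff _).mp hdim
      rw [Module.supportDim_eq_bot_iff_subsingleton, ← Module.support_eq_empty_iff (R := A)] at hbot
      simp [hbot] at hP'
    | succ n =>
      exact ih n n.lt_succ_self (h.quotSMulTop hzm hz)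
        (ENat.WithBot.add_le_add_one_right_iff.mp (mod_cast hdim)) hP'

end Rees

end Depth

section LimitClosure

open RingTheory.Sequence Pointwise

variable {R : Type*} [CommRing R] {M : Type*} [AddCommGroup M] [Module R M]

theorem map_mem_limitClosure {N : Type*} [AddCommGroup N] [Module R N] {r : ℕ} {x : Fin r → R}
    (f : M →ₗ[R] N) {m : M} (hm : m ∈ limitClosure x) : f m ∈ limitClosure x := by
  suffices limitClosure x ≤ (limitClosure x).comap f from this hm
  refine iSup_le fun n m hm => Submodule.mem_iSup_of_mem n ?_
  rw [Submodule.mem_comap, LinearMap.lsmul_apply] at hm ⊢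
  rw [← map_smul]
  exact Submodule.smul_mono le_rfl le_top
    (Submodule.map_smul'' _ _ f ▸ Submodule.mem_map_of_mem hm)

theorem mem_span_pair_smul_top {x y : R} {m : M} :
    m ∈ Ideal.span {x, y} • (⊤ : Submodule R M) ↔ ∃ a b : M, x • a + y • b = m := by
  rw [Ideal.span_insert, Submodule.sup_smul, Submodule.ideal_span_singleton_smul,
    Submodule.ideal_span_singleton_smul, Submodule.mem_sup]
  simp [Submodule.mem_smul_pointwise_iff_exists]

theorem exists_eq_pow_smul_of_isSMulRegular {x y : R} (hx : IsSMulRegular M x)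
    (hy : IsSMulRegular (QuotSMulTop x M) y) (i : ℕ) {a b : M} (h : y • a = x ^ i • b) :
    ∃ a', a = x ^ i • a' := by
  induction i generalizing a with
  | zero => exact ⟨a, by simp⟩
  | succ i ih =>
    have ha : a ∈ x • (⊤ : Submodule R M) := by
      refine mem_of_isSMulRegular_quotient_of_smul_mem hy ?_
      rw [h, pow_succ', mul_smul]
      exact Submodule.smul_mem_pointwise_smul _ _ _ trivial
    obtain ⟨a₁, -, rfl⟩ := (Submodule.mem_smul_pointwise_iff_exists _ _ _).mp ha
    have h₁ : y • a₁ = x ^ i • b := hx (by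
      simpa only [pow_succ', mul_smul, smul_comm x y] using h)
    obtain ⟨a', rfl⟩ := ih h₁
    exact ⟨a', by rw [pow_succ', mul_smul]⟩

theorem limitClosure_le_span_smul_top_of_isWeaklyRegular {x y : R}
    (h : IsWeaklyRegular M [x, y]) :
    limitClosure ![x, y] ≤ Ideal.span {x, y} • (⊤ : Submodule R M) := by
  rw [isWeaklyRegular_cons_iff, isWeaklyRegular_singleton_iff] at h
  obtain ⟨hx, hy⟩ := h
  refine iSup_le fun n w hw => ?_
  obtain ⟨a, b, hab⟩ : ∃ a b : M,
      x ^ (n + 2) • a + y ^ (n + 2) • b = (x * y) ^ (n + 1) • w := by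
    have : (Set.range fun i => ![x, y] i ^ (n + 2)) = {x ^ (n + 2), y ^ (n + 2)} := by
      ext z
      simp [Fin.exists_fin_two, eq_comm]
    rwa [Submodule.mem_comap, this, LinearMap.lsmul_apply, mem_span_pair_smul_top,
      Fin.prod_univ_two] at hw
  obtain ⟨b', rfl⟩ : ∃ b', b = x ^ (n + 1) • b' :=
    exists_eq_pow_smul_of_isSMulRegular hx (hy.pow (n + 2)) (n + 1)
      (b := y ^ (n + 1) • w - x • a) (by
        rw [← eq_sub_iff_add_eq'] at hab
        rw [hab]
        module)
  have hcancel : y ^ (n + 1) • (w - y • b') = x • a := hx.pow (n + 1) (by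
    rw [← sub_eq_zero] at hab ⊢
    rw [← neg_eq_zero, ← hab]
    module)
  have hmem : w - y • b' ∈ x • (⊤ : Submodule R M) :=
    mem_of_isSMulRegular_quotient_of_smul_mem (hy.pow (n + 1))
      (hcancel ▸ Submodule.smul_mem_pointwise_smul _ _ _ trivial)
  obtain ⟨a', -, ha'⟩ := (Submodule.mem_smul_pointwise_iff_exists _ _ _).mp hmem
  exact mem_span_pair_smul_top.mpr ⟨a', b', eq_sub_iff_add_eq.mp ha'⟩

end LimitClosure

section IntegralPolynomials

open Polynomial

/-- A monic polynomial of degree `d` whose coefficient of `X ^ k` lies in `I ^ (d - k)`; the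
elements integral over `I` are the roots of such polynomials. -/
def IsIntegralPoly {R : Type*} [CommRing R] (I : Ideal R) (q : R[X]) : Prop :=
  q.Monic ∧ ∀ k, q.coeff k ∈ I ^ (q.natDegree - k)

variable {R : Type*} [CommRing R] {I : Ideal R}

theorem IsIntegralPoly.one : IsIntegralPoly I (1 : R[X]) :=
  ⟨monic_one, fun k => by simp⟩

theorem IsIntegralPoly.mul {p q : R[X]} (hp : IsIntegralPoly I p) (hq : IsIntegralPoly I q) :
    IsIntegralPoly I (p * q) := by
  refine ⟨hp.1.mul hq.1, fun k => ?_⟩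
  rw [hp.1.natDegree_mul hq.1, coeff_mul]
  refine Ideal.sum_mem _ fun ij hij => ?_
  have hk := Finset.HasAntidiagonal.mem_antidiagonal.mp hij
  refine Ideal.pow_le_pow_right (m := p.natDegree + q.natDegree - k)
    (n := (p.natDegree - ij.1) + (q.natDegree - ij.2)) (by omega) ?_
  rw [pow_add]
  exact Ideal.mul_mem_mul (hp.2 _) (hq.2 _)

theorem IsIntegralPoly.pow {p : R[X]} (hp : IsIntegralPoly I p) (n : ℕ) :
    IsIntegralPoly I (p ^ n) := by
  induction n with
  | zero => simpa using IsIntegralPoly.one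
  | succ n ih => rw [pow_succ]; exact ih.mul hp

theorem IsIntegralPoly.prod {ι : Type*} (s : Finset ι) {p : ι → R[X]}
    (hp : ∀ i ∈ s, IsIntegralPoly I (p i)) : IsIntegralPoly I (∏ i ∈ s, p i) :=
  Finset.prod_induction _ _ (fun _ _ => IsIntegralPoly.mul) IsIntegralPoly.one hp

theorem IsIntegralPoly.isIntegralOverIdeal [Nontrivial R] {q : R[X]} (hq : IsIntegralPoly I q)
    {r : R} (h0 : q.eval r = 0) : IsIntegralOverIdeal I r := by
  have hpos : 0 < q.natDegree := by
    rw [Nat.pos_iff_ne_zero]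
    intro h
    rw [hq.1.natDegree_eq_zero.mp h] at h0
    simp at h0
  refine ⟨q.natDegree, hpos, fun i => q.coeff (q.natDegree - i), fun i _ hi => ?_, ?_⟩
  · have := hq.2 (q.natDegree - i)
    rwa [Nat.sub_sub_self hi] at this
  · rw [eval_eq_sum_range, Finset.sum_range_succ, hq.1.coeff_natDegree, one_mul, add_comm,
      ← Finset.sum_range_reflect] at h0
    rw [← h0, ← Finset.Ico_add_one_right_eq_Icc, Finset.sum_Ico_eq_sum_range,
      Nat.add_sub_cancel]
    simp_rw [Nat.sub_sub]

theorem isIntegralOverIdeal_of_minimalPrimes [IsNoetherianRing R] [Nontrivial R] {r : R}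
    (h : ∀ p ∈ minimalPrimes R, ∃ q : R[X], IsIntegralPoly I q ∧ q.eval r ∈ p) :
    IsIntegralOverIdeal I r := by
  choose! q hq hqr using h
  have hfin := minimalPrimes.finite_of_isNoetherianRing R
  have hnil : IsNilpotent ((∏ p ∈ hfin.toFinset, q p).eval r) := by
    rw [nilpotent_iff_mem_prime]
    intro J hJ
    obtain ⟨p, hp, hpJ⟩ := Ideal.exists_minimalPrimes_le (I := (⊥ : Ideal R)) (J := J) bot_le
    rw [eval_prod]
    exact Ideal.mem_of_dvd _ (Finset.dvd_prod_of_mem (fun p => (q p).eval r)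
      (hfin.mem_toFinset.mpr hp)) (hpJ (hqr p hp))
  obtain ⟨n, hn⟩ := hnil
  refine ((IsIntegralPoly.prod hfin.toFinset fun p hp => hq p
    (hfin.mem_toFinset.mp hp)).pow n).isIntegralOverIdeal (r := r) ?_
  rw [eval_pow, hn]

theorem exists_isIntegralPoly_eval_mem_annihilator {N : Type*} [AddCommGroup N] [Module R N]
    [Module.Finite R N] {r : R} (h : ∀ e : N, r • e ∈ I • (⊤ : Submodule R N)) :
    ∃ q : R[X], IsIntegralPoly I q ∧ q.eval r ∈ Module.annihilator R N := by
  obtain ⟨q, hq, -, hcoeff, hq0⟩ :=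
    LinearMap.exists_monic_and_natDegree_eq_and_coeff_mem_pow_and_aeval_eq_zero R
      (algebraMap R (Module.End R N) r) I (by rintro _ ⟨e, rfl⟩; exact h e)
  refine ⟨q, ⟨hq, hcoeff⟩, Module.mem_annihilator.mpr fun e => ?_⟩
  rw [aeval_algebraMap_apply] at hq0
  exact LinearMap.congr_fun hq0 e

end IntegralPolynomials

section MinimalPrimes

open RingTheory.Sequence

theorem exists_hasDepthGE_two_annihilator_eq {A : Type u} [CommRing A] [IsNoetherianRing A]
    [IsLocalRing A] (hA : IsCohenMacaulayRing A) {P : Ideal A} [hPp : P.IsPrime]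
    (hP : ringKrullDim (A ⧸ P) = 2) :
    ∃ (N : Type u) (_ : AddCommGroup N) (_ : Module A N),
      Module.Finite A N ∧ HasDepthGE A 2 N ∧ Module.annihilator A N = P := by
  obtain ⟨rs, hrs, hlen⟩ := hA
  have hsupp : ⟨P, hPp⟩ ∈ Module.support A A := by
    rw [Module.mem_support_iff_of_finite, Module.annihilator_eq_bot.mpr inferInstance]
    exact bot_le
  obtain ⟨M, _, _, _, hM, hPM⟩ := HasDepthGE.exists_isAssociatedPrime ⟨rs, rfl, hrs⟩
    (by rw [Module.supportDim_self_eq_ringKrullDim, hlen]) hsupp (d := 2) hP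
  have := nontrivial_torsionBySet_of_isAssociatedPrime hPM
  exact ⟨Submodule.torsionBySet A M P, _, _, inferInstance, hM.torsionBySet_two P,
    annihilator_torsionBySet_of_isAssociatedPrime hPM⟩

theorem exists_module_smul_eq_of_ker_le_annihilator {A R : Type*} [CommRing A] [CommRing R]
    {f : A →+* R} (hf : Function.Surjective f) {N : Type*} [AddCommGroup N] [Module A N]
    (h : RingHom.ker f ≤ Module.annihilator A N) :
    ∃ _ : Module R N, ∀ (a : A) (e : N), f a • e = a • e := by
  have hker : RingHom.ker f ≤ RingHom.ker (Module.toAddMonoidEnd A N) := fun a ha =>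
    AddMonoidHom.ext (Module.mem_annihilator.mp (h ha))
  refine ⟨Module.compHom N (f.liftOfSurjective hf ⟨_, hker⟩), fun a e => ?_⟩
  exact DFunLike.congr_fun (f.liftOfRightInverse_comp_apply _
    (Function.rightInverse_surjInv hf) ⟨_, hker⟩ a) e

theorem eq_closedPoint_of_ker_le {A R : Type*} [CommRing A] [IsLocalRing A] [CommRing R]
    [IsLocalRing R] {f : A →+* R} (hf : Function.Surjective f) {I : Ideal A}
    (hI : (I.map f).radical = maximalIdeal R) {Q : PrimeSpectrum A} (hIQ : I ≤ Q.asIdeal)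
    (hker : RingHom.ker f ≤ Q.asIdeal) : Q = closedPoint A := by
  refine PrimeSpectrum.ext (le_antisymm (IsLocalRing.le_maximalIdeal Q.isPrime.ne_top) ?_)
  have := IsLocalHom.of_surjective f hf
  calc maximalIdeal A ≤ (I.map f).radical.comap f := fun a ha => hI ▸ map_nonunit f a ha
    _ = ((I.map f).comap f).radical := Ideal.comap_radical f _
    _ = (I ⊔ RingHom.ker f).radical := by rw [Ideal.comap_map_of_surjective' f hf]
    _ ≤ Q.asIdeal := Q.isPrime.radical_le_iff.mpr (sup_le hIQ hker)

theorem HasDepthGE.isWeaklyRegular_pair_of_isSOP_map {A : Type u} [CommRing A] [IsNoetherianRing A]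
    [IsLocalRing A] {N : Type u} [AddCommGroup N] [Module A N] [Module.Finite A N]
    (hN : HasDepthGE A 2 N) {R : Type*} [CommRing R] [IsLocalRing R] {f : A →+* R}
    (hf : Function.Surjective f) (hker : RingHom.ker f ≤ Module.annihilator A N) {x y : A}
    (hxy : IsSOP R ![f x, f y]) : IsWeaklyRegular N [x, y] := by
  have hrad : ((Ideal.ofList [x, y]).map f).radical = maximalIdeal R := by
    rw [← hxy.2, Ideal.map_ofList, Ideal.ofList]
    congr 2
    ext
    simp [or_comm]
  have mem_of_map_mem {a : A} (ha : f a ∈ maximalIdeal R) : a ∈ maximalIdeal A :=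
    fun hunit => ha (hunit.map f)
  refine HasDepthGE.isWeaklyRegular hN ?_ fun Q hQ => ?_
  · exact List.forall_mem_cons.mpr ⟨mem_of_map_mem (hxy.1 0),
      List.forall_mem_singleton.mpr (mem_of_map_mem (hxy.1 1))⟩
  · exact eq_closedPoint_of_ker_le hf hrad hQ.2
      (hker.trans (Module.annihilator_le_of_mem_support hQ.1))

theorem exists_isWeaklyRegular_annihilator_eq {A : Type u} [CommRing A] [IsNoetherianRing A]
    [IsLocalRing A] (hA : IsCohenMacaulayRing A) {R : Type*} [CommRing R] [IsLocalRing R]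
    {f : A →+* R} (hf : Function.Surjective f) {p : Ideal R} [p.IsPrime]
    (hp : ringKrullDim (R ⧸ p) = 2) {x y : R} (hxy : IsSOP R ![x, y]) :
    ∃ (N : Type u) (_ : AddCommGroup N) (_ : Module R N),
      Module.Finite R N ∧ IsWeaklyRegular N [x, y] ∧ Module.annihilator R N = p := by
  have hdim : ringKrullDim (A ⧸ p.comap f) = 2 := hp ▸ ringKrullDim_eq_of_ringEquiv
    (RingEquiv.ofBijective (Ideal.quotientMap p f le_rfl)
      ⟨Ideal.quotientMap_injective, Ideal.quotientMap_surjective hf⟩)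
  obtain ⟨N, _, _, _, hdepth, hann⟩ := exists_hasDepthGE_two_annihilator_eq hA hdim
  have hker : RingHom.ker f ≤ Module.annihilator A N := hann ▸ Ideal.comap_mono bot_le
  obtain ⟨_, hsmul⟩ := exists_module_smul_eq_of_ker_le_annihilator hf hker
  let _ : Algebra A R := f.toAlgebra
  have : IsScalarTower A R N := IsScalarTower.of_algebraMap_smul hsmul
  obtain ⟨x, rfl⟩ := hf x
  obtain ⟨y, rfl⟩ := hf y
  refine ⟨N, _, _, .of_restrictScalars_finite A R N, ?_, ?_⟩
  · exact (isWeaklyRegular_map_algebraMap_iff R N [x, y]).mpr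
      (hdepth.isWeaklyRegular_pair_of_isSOP_map hf hker hxy)
  · exact Ideal.comap_injective_of_surjective f hf
      ((Module.comap_annihilator (R₀ := A)).trans hann)

end MinimalPrimes

/-- Let `(R, m)` be an equidimensional Noetherian local ring of dimension two which is an
image of a Cohen–Macaulay local ring, and let `x, y` be a system of parameters of `R`.
Then `(x, y)^lim` is contained in the integral closure of `(x, y)`. -/
theorem limitClosure_le_integralClosure_dim_two
    {R : Type*} [CommRing R] [IsNoetherianRing R] [IsLocalRing R]
    (hdim : ringKrullDim R = 2) (hequi : IsEquidimensionalRing R)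
    (A : Type*) [CommRing A] [IsNoetherianRing A] [IsLocalRing A]
    (hACM : IsCohenMacaulayRing A) (f : A →+* R) (hf : Function.Surjective f)
    (x y : R) (hxy : IsSOP R ![x, y]) :
    ∀ r ∈ limitClosure (M := R) ![x, y],
      IsIntegralOverIdeal (Ideal.span {x, y}) r := by
  intro r hr
  refine isIntegralOverIdeal_of_minimalPrimes fun p hp => ?_
  have hprime : p.IsPrime := hp.1.1
  have hp2 : ringKrullDim (R ⧸ p) = 2 := (hequi p hp).trans hdim
  obtain ⟨N, _, _, _, hreg, rfl⟩ := exists_isWeaklyRegular_annihilator_eq hACM hf hp2 hxy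
  refine exists_isIntegralPoly_eval_mem_annihilator fun e => ?_
  exact limitClosure_le_span_smul_top_of_isWeaklyRegular hreg
    (map_mem_limitClosure (LinearMap.toSpanSingleton R N e) hr)
end

section
/- Let K be a field of characteristic 0, let A = K[X, Y, U, V]/(f) where f = XY − UX² − VY², denote by x, y, u, v the images of X, Y, U, V, and let R = A_m be the localization of A at the maximal ideal m = (x, y, u, v). Then for all n ≥ 1, the limit closure of the system of parameters y^n, u^n, v^n of R satisfies (y^n, u^n, v^n)^lim = (y^n, u^n, v^n, x − yv·Σ_{i=0}^{n-2} C_i (uv)^i), where C_i is the i-th Catalan number (the sum being empty when n = 1). -/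
/-!
Write `c_N = ∑_{i<N} Cᵢ (uv)ⁱ` for the truncated Catalan series. The functional equation
`c = 1 + uv c²` of the full series holds for `c_N` modulo `(uv)^N`, so `x = y v c_N` is an
approximate solution of `xy = ux² + vy²`.

*The right-hand side lies in the limit closure.* With `z = x - y v c_N`, the relation gives
`(y - u x c_N) z = -xy (c_N - 1 - uv c_N²) ∈ (u^N)`. Hence `y^N z ≡ (u x c_N)^N z ≡ 0` modulo `u^N`,
and `(yuv)^N z ∈ (u^{2N})`. Taking `N = n` instead of `n - 1` changes `z` by a multiple of `vⁿ`.

*The limit closure lies in the right-hand side.* For each `N`, the point `(Y V c_N(UV), Y, U, V)`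
solves the equation in `K[Y, U, V]/(Y^N, U^N, V^N)` and has nilpotent coordinates, so it defines a
map `φ` on the localization `R`. If `(yuv)^m a ∈ (y^{n+m}, u^{n+m}, v^{n+m})` and `N = n + m`, then
`(YUV)^m φ(a) = 0`, and comparing monomials gives `φ(a) ∈ (Yⁿ, Uⁿ, Vⁿ)`. Now send `Y, U, V` to
`y, u, v` modulo the right-hand side: there `x = y v c_N`, so the composite with `φ` is the quotient
map of `R`, and it kills `a`.
-/

open IsLocalRing

set_option synthInstance.maxHeartbeats 1000000
set_option maxHeartbeats 1000000

/-- The polynomial `f = XY − UX² − VY²` in `K[X, Y, U, V]`, the variables `X, Y, U, V` being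
indexed by `0, 1, 2, 3 : Fin 4`. -/
noncomputable def fpoly (K : Type*) [Field K] : MvPolynomial (Fin 4) K :=
  MvPolynomial.X 0 * MvPolynomial.X 1 - MvPolynomial.X 2 * MvPolynomial.X 0 ^ 2 -
    MvPolynomial.X 3 * MvPolynomial.X 1 ^ 2

/-- The ring `A = K[X, Y, U, V]/(f)`. -/
abbrev Aring (K : Type*) [Field K] := MvPolynomial (Fin 4) K ⧸ Ideal.span {fpoly K}

/-- The images `x, y, u, v` of `X, Y, U, V` in `A = K[X, Y, U, V]/(f)`. -/
noncomputable def xA (K : Type*) [Field K] (i : Fin 4) : Aring K :=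
  Ideal.Quotient.mk (Ideal.span {fpoly K}) (MvPolynomial.X i)

/-- The maximal ideal `m = (x, y, u, v)` of `A`. -/
noncomputable def mA (K : Type*) [Field K] : Ideal (Aring K) :=
  Ideal.span {xA K 0, xA K 1, xA K 2, xA K 3}

/-! ### Limit closures -/

section LimitClosure

variable {R M : Type*} [CommRing R] [AddCommGroup M] [Module R M] {r : ℕ}

lemma mem_limitClosure_of_prod_smul_mem {x : Fin r → R} {a : M}
    (h : (∏ i, x i) • a ∈ Ideal.span (Set.range fun i => x i ^ 2) • (⊤ : Submodule R M)) :
    a ∈ limitClosure (M := M) x := by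
  refine Submodule.mem_iSup_of_mem 0 ?_
  simpa only [Submodule.mem_comap, LinearMap.lsmul_apply, zero_add, pow_one] using h

lemma span_range_smul_top_le_limitClosure (x : Fin r → R) :
    Ideal.span (Set.range x) • (⊤ : Submodule R M) ≤ limitClosure x := by
  refine Submodule.smul_le.2 fun s hs a _ => mem_limitClosure_of_prod_smul_mem ?_
  rw [smul_smul]
  refine Submodule.smul_mem_smul ?_ Submodule.mem_top
  suffices Ideal.span (Set.range x) ≤ Submodule.comap (LinearMap.mulLeft R (∏ i, x i))
      (Ideal.span (Set.range fun i => x i ^ 2)) from this hs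
  refine Submodule.span_le.2 ?_
  rintro _ ⟨i, rfl⟩
  rw [SetLike.mem_coe, Submodule.mem_comap, LinearMap.mulLeft_apply,
    ← Finset.prod_erase_mul _ _ (Finset.mem_univ i), mul_assoc, ← sq]
  exact Ideal.mul_mem_left _ _ (Ideal.subset_span ⟨i, rfl⟩)

lemma limitClosure_pow_le {x : Fin r → R} {n : ℕ} {N : Submodule R M}
    (h : ∀ (m : ℕ) (a : M), (∏ i, x i) ^ m • a ∈
      Ideal.span (Set.range fun i => x i ^ (n + m)) • (⊤ : Submodule R M) → a ∈ N) :
    limitClosure (fun i => x i ^ n) ≤ N := by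
  refine iSup_le fun k a ha => h (n * (k + 1)) a ?_
  have hexp : n + n * (k + 1) = n * (k + 2) := by ring
  simpa only [Submodule.mem_comap, LinearMap.lsmul_apply, Finset.prod_pow, ← pow_mul, hexp]
    using ha

end LimitClosure

/-! ### Truncations of the Catalan series -/

section CatalanSum

/-- The truncation `∑_{i<N} Cᵢ tⁱ` of the Catalan generating series, evaluated at `t`. -/
def catalanSum {R : Type*} [Semiring R] (N : ℕ) (t : R) : R :=
  ∑ i ∈ Finset.range N, (catalan i : R) * t ^ i

lemma map_catalanSum {R S F : Type*} [Semiring R] [Semiring S] [FunLike F R S]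
    [RingHomClass F R S] (φ : F) (N : ℕ) (t : R) : φ (catalanSum N t) = catalanSum N (φ t) := by
  simp [catalanSum]

lemma X_pow_dvd_coe_trunc_sub {R : Type*} [Ring R] (N : ℕ) (f : PowerSeries R) :
    PowerSeries.X ^ N ∣ (f.trunc N : PowerSeries R) - f :=
  PowerSeries.X_pow_dvd_iff.2 fun d hd => by
    rw [map_sub, Polynomial.coeff_coe, PowerSeries.coeff_trunc, if_pos hd, sub_self]

lemma X_pow_dvd_coe_iff {R : Type*} [Semiring R] {p : Polynomial R} {N : ℕ} :
    PowerSeries.X ^ N ∣ (p : PowerSeries R) ↔ Polynomial.X ^ N ∣ p := by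
  simp only [PowerSeries.X_pow_dvd_iff, Polynomial.X_pow_dvd_iff, Polynomial.coeff_coe]

variable {R : Type*} [CommRing R]

lemma pow_dvd_catalanSum_sub {n N : ℕ} (h : n ≤ N) (t : R) :
    t ^ n ∣ catalanSum N t - catalanSum n t := by
  obtain ⟨d, rfl⟩ := Nat.exists_eq_add_of_le h
  rw [catalanSum, catalanSum, Finset.sum_range_add, add_sub_cancel_left]
  exact Finset.dvd_sum fun i _ => ⟨(catalan (n + i) : R) * t ^ i, by ring⟩

lemma pow_dvd_catalanSum_sub_one_sub (N : ℕ) (t : R) :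
    t ^ N ∣ catalanSum N t - 1 - t * catalanSum N t ^ 2 := by
  let c : PowerSeries ℤ := PowerSeries.catalanSeries.map (Nat.castRingHom ℤ)
  let p : Polynomial ℤ := c.trunc N
  have hc : c = 1 + PowerSeries.X * c ^ 2 := by
    simpa [c, add_comm, mul_comm] using
      (congrArg (PowerSeries.map (Nat.castRingHom ℤ))
        PowerSeries.catalanSeries_sq_mul_X_add_one).symm
  have hp : Polynomial.X ^ N ∣ p - 1 - Polynomial.X * p ^ 2 := by
    rw [← X_pow_dvd_coe_iff]
    push_cast
    have hfactor : (p : PowerSeries ℤ) - 1 - PowerSeries.X * (p : PowerSeries ℤ) ^ 2 =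
        ((p : PowerSeries ℤ) - c) * (1 - PowerSeries.X * ((p : PowerSeries ℤ) + c)) := by
      linear_combination hc
    rw [hfactor]
    exact (X_pow_dvd_coe_trunc_sub N c).mul_right _
  have heval : p.eval₂ (Int.castRingHom R) t = catalanSum N t := by
    simp [p, c, catalanSum, PowerSeries.eval₂_trunc_eq_sum_range]
  simpa [heval, Polynomial.eval₂_pow] using
    map_dvd (Polynomial.eval₂RingHom (Int.castRingHom R) t) hp

end CatalanSum

/-! ### The Catalan ideal -/

section CatalanIdeal

variable {R : Type*} [CommRing R]

/-- The ideal `(yⁿ⁺¹, uⁿ⁺¹, vⁿ⁺¹, x − yv·Σ_{i<n} Cᵢ(uv)ⁱ)` at `t = (x, y, u, v)`. The index is the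
number of terms of the sum, one less than the exponent, so that no subtraction occurs. -/
def catalanIdeal (t : Fin 4 → R) (n : ℕ) : Ideal R :=
  Ideal.span {t 1 ^ (n + 1), t 2 ^ (n + 1), t 3 ^ (n + 1),
    t 0 - t 1 * t 3 * catalanSum n (t 2 * t 3)}

lemma pow_succ_dvd_mul_catalanSum_sub {n N : ℕ} (h : n ≤ N) (u v : R) :
    v ^ (n + 1) ∣ v * (catalanSum N (u * v) - catalanSum n (u * v)) := by
  rw [pow_succ']
  refine mul_dvd_mul_left v (dvd_trans ?_ (pow_dvd_catalanSum_sub h (u * v)))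
  exact pow_dvd_pow_of_dvd (dvd_mul_left v u) n

lemma sub_mul_catalanSum_mem_iff {I : Ideal R} {n N : ℕ} {v : R} (hv : v ^ (n + 1) ∈ I)
    (h : n ≤ N) (x y u : R) :
    x - y * v * catalanSum n (u * v) ∈ I ↔ x - y * v * catalanSum N (u * v) ∈ I := by
  have hd : y * (v * (catalanSum N (u * v) - catalanSum n (u * v))) ∈ I :=
    I.mul_mem_left y (I.mem_of_dvd (pow_succ_dvd_mul_catalanSum_sub h u v) hv)
  have hsplit : x - y * v * catalanSum n (u * v) = x - y * v * catalanSum N (u * v) +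
      y * (v * (catalanSum N (u * v) - catalanSum n (u * v))) := by ring
  rw [hsplit, Ideal.add_mem_iff_left I hd]

lemma sub_mul_catalanSum_mem_catalanIdeal {n N : ℕ} (h : n ≤ N) (t : Fin 4 → R) :
    t 0 - t 1 * t 3 * catalanSum N (t 2 * t 3) ∈ catalanIdeal t n :=
  (sub_mul_catalanSum_mem_iff (Ideal.subset_span (by simp)) h _ _ _).1
    (Ideal.subset_span (by simp))

lemma pow_dvd_pow_mul_of_dvd_sub_mul {y u w z : R} {N : ℕ} (h : u ^ N ∣ (y - u * w) * z) :
    u ^ N ∣ y ^ N * z := by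
  have hsub : u ^ N ∣ y ^ N * z - (u * w) ^ N * z := by
    rw [← sub_mul]
    exact h.trans (mul_dvd_mul_right (sub_dvd_pow_sub_pow y (u * w) N) z)
  refine (dvd_sub_left (Dvd.dvd.mul_right ?_ z)).1 hsub
  exact pow_dvd_pow_of_dvd (dvd_mul_right u w) N

lemma pow_dvd_pow_mul_sub_mul_catalanSum {x y u v : R} (hf : x * y = u * x ^ 2 + v * y ^ 2)
    (N : ℕ) : u ^ N ∣ y ^ N * (x - y * v * catalanSum N (u * v)) := by
  set c := catalanSum N (u * v)
  refine pow_dvd_pow_mul_of_dvd_sub_mul (w := x * c) ?_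
  have hfactor : (y - u * (x * c)) * (x - y * v * c) = -(x * y) * (c - 1 - u * v * c ^ 2) := by
    linear_combination c * hf
  rw [hfactor]
  refine Dvd.dvd.mul_left (dvd_trans ?_ (pow_dvd_catalanSum_sub_one_sub N (u * v))) _
  exact pow_dvd_pow_of_dvd (dvd_mul_right u v) N

lemma catalanIdeal_le_limitClosure {t : Fin 4 → R}
    (ht : t 0 * t 1 = t 2 * t 0 ^ 2 + t 3 * t 1 ^ 2) (n : ℕ) :
    catalanIdeal t n ≤ limitClosure (M := R) (fun i : Fin 3 => t i.succ ^ (n + 1)) := by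
  set L : Ideal R := limitClosure (M := R) fun i : Fin 3 => t i.succ ^ (n + 1)
  have hpow (i : Fin 3) : t i.succ ^ (n + 1) ∈ L := by
    refine span_range_smul_top_le_limitClosure (M := R) _ ?_
    rw [Ideal.smul_eq_mul, Ideal.mul_top]
    exact Ideal.subset_span ⟨i, rfl⟩
  have hx : t 0 - t 1 * t 3 * catalanSum n (t 2 * t 3) ∈ L := by
    rw [sub_mul_catalanSum_mem_iff (v := t 3) (hpow 2) n.le_succ]
    obtain ⟨q, hq⟩ := pow_dvd_pow_mul_sub_mul_catalanSum ht (n + 1)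
    refine mem_limitClosure_of_prod_smul_mem ?_
    rw [Ideal.smul_eq_mul, Ideal.mul_top]
    refine Ideal.mem_of_dvd _ (Dvd.intro (t 3 ^ (n + 1) * q) ?_) (Ideal.subset_span ⟨1, rfl⟩)
    simp only [Fin.prod_univ_three, smul_eq_mul]
    change (t 2 ^ (n + 1)) ^ 2 * (t 3 ^ (n + 1) * q) =
      t 1 ^ (n + 1) * t 2 ^ (n + 1) * t 3 ^ (n + 1) * _
    linear_combination -(t 2 ^ (n + 1) * t 3 ^ (n + 1)) * hq
  rw [catalanIdeal, Ideal.span_le]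
  rintro _ (rfl | rfl | rfl | rfl)
  exacts [hpow 0, hpow 1, hpow 2, hx]

end CatalanIdeal

/-! ### Powers of the variables in a polynomial ring -/

section VarPowIdeal

variable {σ K : Type*}

open MvPolynomial

/-- The ideal generated by the `N`-th powers of the variables of a polynomial ring. -/
noncomputable def varPowIdeal (σ K : Type*) [CommSemiring K] (N : ℕ) : Ideal (MvPolynomial σ K) :=
  Ideal.span (Set.range fun i => X i ^ N)

lemma mem_varPowIdeal_iff [CommSemiring K] {N : ℕ} {p : MvPolynomial σ K} :
    p ∈ varPowIdeal σ K N ↔ ∀ a ∈ p.support, ∃ i, N ≤ a i := by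
  have hrange : (Set.range fun i => (X i : MvPolynomial σ K) ^ N) =
      (fun a => monomial a 1) '' Set.range fun i => Finsupp.single i N := by
    rw [← Set.range_comp]
    simp only [Function.comp_def, X_pow_eq_monomial]
  simp [varPowIdeal, hrange, mem_ideal_span_monomial_image]

lemma mem_varPowIdeal_of_prod_pow_mul_mem [CommSemiring K] [Fintype σ] {n m : ℕ}
    {p : MvPolynomial σ K} (h : (∏ i, X i) ^ m * p ∈ varPowIdeal σ K (n + m)) :
    p ∈ varPowIdeal σ K n := by
  let e : σ →₀ ℕ := Finsupp.equivFunOnFinite.symm fun _ => m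
  have hprod : (∏ i, X i : MvPolynomial σ K) ^ m = monomial e 1 := by
    simp [e, monomial_eq, Finsupp.prod_fintype, Finset.prod_pow]
  rw [hprod, mem_varPowIdeal_iff] at h
  rw [mem_varPowIdeal_iff]
  intro a ha
  obtain ⟨i, hi⟩ := h (e + a) (by simpa [mem_support_iff, coeff_monomial_mul] using ha)
  exact ⟨i, by simpa [e, add_comm n m] using hi⟩

lemma varPowIdeal_le_ker_aeval {B : Type*} [CommSemiring K] [CommSemiring B] [Algebra K B]
    {N : ℕ} {b : σ → B} (hb : ∀ i, b i ^ N = 0) :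
    varPowIdeal σ K N ≤ RingHom.ker (aeval (R := K) b) := by
  rw [varPowIdeal, Ideal.span_le]
  rintro _ ⟨i, rfl⟩
  simp [hb]

lemma mk_X_pow_eq_zero [CommRing K] (N : ℕ) (i : σ) :
    Ideal.Quotient.mk (varPowIdeal σ K N) (X i) ^ N = 0 := by
  rw [← map_pow, Ideal.Quotient.eq_zero_iff_mem]
  exact Ideal.subset_span ⟨i, rfl⟩

lemma sub_C_constantCoeff_mem_idealOfVars [CommRing K] (p : MvPolynomial σ K) :
    p - C (constantCoeff p) ∈ idealOfVars σ K := by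
  rw [← pow_one (idealOfVars σ K), mem_pow_idealOfVars_iff']
  intro a ha
  obtain rfl : a = 0 := by simpa [Nat.lt_one_iff, Finsupp.degree_eq_zero_iff] using ha
  simp [← constantCoeff_eq]

end VarPowIdeal

/-! ### Maps out of localizations of `A` -/

section Localization

lemma xA_rel (K : Type*) [Field K] :
    xA K 0 * xA K 1 = xA K 2 * xA K 0 ^ 2 + xA K 3 * xA K 1 ^ 2 := by
  have hf : Ideal.Quotient.mk (Ideal.span {fpoly K}) (fpoly K) = 0 :=
    Ideal.Quotient.eq_zero_iff_mem.2 (Ideal.mem_span_singleton_self _)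
  rw [← sub_eq_zero, ← sub_sub]
  exact hf

/-- The images `x, y, u, v` of the variables in an `A`-algebra `R`. -/
noncomputable def coord (K R : Type*) [Field K] [CommRing R] [Algebra (Aring K) R] (i : Fin 4) :
    R :=
  algebraMap (Aring K) R (xA K i)

lemma coord_rel (K R : Type*) [Field K] [CommRing R] [Algebra (Aring K) R] :
    coord K R 0 * coord K R 1 = coord K R 2 * coord K R 0 ^ 2 + coord K R 3 * coord K R 1 ^ 2 := by
  simpa only [coord, map_add, map_mul, map_pow] using
    congrArg (algebraMap (Aring K) R) (xA_rel K)

variable {K : Type*} [Field K]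

lemma xA_mem_mA (i : Fin 4) : xA K i ∈ mA K :=
  Ideal.subset_span (by fin_cases i <;> simp)

lemma exists_sub_algebraMap_mem_mA (a : Aring K) :
    ∃ c : K, a - algebraMap K (Aring K) c ∈ mA K := by
  obtain ⟨p, rfl⟩ := Ideal.Quotient.mk_surjective a
  refine ⟨MvPolynomial.constantCoeff p, ?_⟩
  have hle : MvPolynomial.idealOfVars (Fin 4) K ≤
      (mA K).comap (Ideal.Quotient.mk (Ideal.span {fpoly K})) := by
    rw [Ideal.span_le]
    rintro _ ⟨i, rfl⟩
    exact xA_mem_mA i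
  exact hle (sub_C_constantCoeff_mem_idealOfVars p)

variable {B : Type*} [CommRing B] [Algebra K B]

lemma isUnit_of_notMem_mA {φ : Aring K →ₐ[K] B} (hφ : ∀ i, IsNilpotent (φ (xA K i)))
    {a : Aring K} (ha : a ∉ mA K) : IsUnit (φ a) := by
  have hnil : mA K ≤ (nilradical B).comap φ := by
    rw [mA, Ideal.span_le]
    rintro _ (rfl | rfl | rfl | rfl)
    exacts [hφ 0, hφ 1, hφ 2, hφ 3]
  obtain ⟨c, hc⟩ := exists_sub_algebraMap_mem_mA a
  have hc0 : c ≠ 0 := by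
    rintro rfl
    exact ha (by simpa using hc)
  have hunit := IsNilpotent.isUnit_add_left_of_commute (hnil hc) (hc0.isUnit.map (algebraMap K B))
    (Commute.all _ _)
  simpa using hunit

variable {R : Type*} [CommRing R] [Algebra (Aring K) R] [Algebra K R]
  [IsScalarTower K (Aring K) R] (S : Submonoid (Aring K)) [IsLocalization S R]

include S in
lemma algHom_ext_coord {φ ψ : R →ₐ[K] B} (h : ∀ i, φ (coord K R i) = ψ (coord K R i)) :
    φ = ψ := by
  have hA : φ.comp (IsScalarTower.toAlgHom K (Aring K) R) =
      ψ.comp (IsScalarTower.toAlgHom K (Aring K) R) :=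
    Ideal.Quotient.algHom_ext _ (MvPolynomial.algHom_ext h)
  exact IsLocalization.algHom_ext S hA

lemma exists_algHom_coord_eq (hS : Disjoint (S : Set (Aring K)) (mA K)) {t : Fin 4 → B}
    (ht : t 0 * t 1 = t 2 * t 0 ^ 2 + t 3 * t 1 ^ 2) (hnil : ∀ i, IsNilpotent (t i)) :
    ∃ φ : R →ₐ[K] B, ∀ i, φ (coord K R i) = t i := by
  have hker : ∀ p ∈ Ideal.span {fpoly K}, MvPolynomial.aeval t p = 0 := by
    change Ideal.span {fpoly K} ≤ RingHom.ker (MvPolynomial.aeval t)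
    simp [RingHom.mem_ker, fpoly, ht]
  let φ : Aring K →ₐ[K] B := Ideal.Quotient.liftₐ _ (MvPolynomial.aeval t) hker
  have hφ (i : Fin 4) : φ (xA K i) = t i := MvPolynomial.aeval_X t i
  have hunit (s : S) : IsUnit (φ s) :=
    isUnit_of_notMem_mA (fun i => (hφ i).symm ▸ hnil i) (Set.disjoint_left.1 hS s.2)
  exact ⟨IsLocalization.liftAlgHom hunit, fun i => (IsLocalization.lift_eq hunit _).trans (hφ i)⟩

end Localization

/-! ### The approximate branch `x = y v c_N(uv)` -/

section CatalanPoint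

variable {B : Type*} [CommRing B]

/-- The point `(x, y, u, v) = (b₀ b₂ c_N(b₁ b₂), b₀, b₁, b₂)` over `b = (y, u, v)`, which lies on
`f = 0` up to a multiple of `b₁ ^ N`. -/
def catalanPoint (b : Fin 3 → B) (N : ℕ) : Fin 4 → B :=
  Fin.cons (b 0 * b 2 * catalanSum N (b 1 * b 2)) b

lemma map_catalanPoint {C F : Type*} [CommRing C] [FunLike F B C] [RingHomClass F B C] (φ : F)
    (b : Fin 3 → B) (N : ℕ) (i : Fin 4) :
    φ (catalanPoint b N i) = catalanPoint (φ ∘ b) N i := by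
  cases i using Fin.cases <;> simp [catalanPoint, map_catalanSum]

lemma catalanPoint_rel {b : Fin 3 → B} {N : ℕ} (hb : b 1 ^ N = 0) :
    catalanPoint b N 0 * catalanPoint b N 1 =
      catalanPoint b N 2 * catalanPoint b N 0 ^ 2 +
        catalanPoint b N 3 * catalanPoint b N 1 ^ 2 := by
  obtain ⟨q, hq⟩ := pow_dvd_catalanSum_sub_one_sub N (b 1 * b 2)
  rw [mul_pow, hb, zero_mul, zero_mul] at hq
  change b 0 * b 2 * catalanSum N (b 1 * b 2) * b 0 =
    b 1 * (b 0 * b 2 * catalanSum N (b 1 * b 2)) ^ 2 + b 2 * b 0 ^ 2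
  linear_combination b 0 ^ 2 * b 2 * hq

lemma isNilpotent_catalanPoint {b : Fin 3 → B} (hb : ∀ i, IsNilpotent (b i)) (N : ℕ) (i : Fin 4) :
    IsNilpotent (catalanPoint b N i) := by
  cases i using Fin.cases with
  | zero =>
    simp only [catalanPoint, Fin.cons_zero, mul_assoc]
    exact (Commute.all _ _).isNilpotent_mul_right (hb 0)
  | succ i => exact hb i

lemma catalanPoint_mk_catalanIdeal {n N : ℕ} (h : n ≤ N) (t : Fin 4 → B) (i : Fin 4) :
    catalanPoint (fun j => Ideal.Quotient.mk (catalanIdeal t n) (t j.succ)) N i =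
      Ideal.Quotient.mk (catalanIdeal t n) (t i) := by
  cases i using Fin.cases with
  | zero =>
    have hx := Ideal.Quotient.eq.2 (sub_mul_catalanSum_mem_catalanIdeal h t)
    simpa [catalanPoint, map_catalanSum] using hx.symm
  | succ i => rfl

end CatalanPoint

/-! ### The limit closure of `yⁿ⁺¹, uⁿ⁺¹, vⁿ⁺¹` -/

section LimitClosureCoord

open MvPolynomial

variable {K R : Type*} [Field K] [CommRing R] [Algebra (Aring K) R] [Algebra K R]
  [IsScalarTower K (Aring K) R] (S : Submonoid (Aring K)) [IsLocalization S R]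

include S in
lemma mem_catalanIdeal_of_algHom_eq_mk {n N : ℕ} (h : n < N)
    {φ : R →ₐ[K] MvPolynomial (Fin 3) K ⧸ varPowIdeal (Fin 3) K N}
    (hφ : ∀ i, φ (coord K R i) = catalanPoint (fun j => Ideal.Quotient.mk _ (X j)) N i)
    {a : R} {p : MvPolynomial (Fin 3) K} (ha : φ a = Ideal.Quotient.mk _ p)
    (hp : p ∈ varPowIdeal (Fin 3) K (n + 1)) :
    a ∈ catalanIdeal (coord K R) n := by
  set J := catalanIdeal (coord K R) n
  let b : Fin 3 → R ⧸ J := fun i => Ideal.Quotient.mk J (coord K R i.succ)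
  have hb (i : Fin 3) : b i ^ (n + 1) = 0 := by
    rw [← map_pow, Ideal.Quotient.eq_zero_iff_mem]
    refine Ideal.subset_span ?_
    fin_cases i <;> simp
  let ψ : MvPolynomial (Fin 3) K ⧸ varPowIdeal (Fin 3) K N →ₐ[K] R ⧸ J :=
    Ideal.Quotient.liftₐ _ (aeval b)
      (varPowIdeal_le_ker_aeval fun i => pow_eq_zero_of_le h (hb i))
  have hψ (q : MvPolynomial (Fin 3) K) : ψ (Ideal.Quotient.mk _ q) = aeval b q := rfl
  have hψφ : ψ.comp φ = Ideal.Quotient.mkₐ K J := by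
    refine algHom_ext_coord S fun i => ?_
    have hψX : ψ ∘ (fun j => Ideal.Quotient.mk _ (X j)) = b := by
      ext j
      exact (hψ _).trans (aeval_X b j)
    calc ψ (φ (coord K R i)) = catalanPoint b N i := by rw [hφ, map_catalanPoint, hψX]
      _ = Ideal.Quotient.mk J (coord K R i) := catalanPoint_mk_catalanIdeal h.le _ i
  rw [← Ideal.Quotient.eq_zero_iff_mem]
  calc Ideal.Quotient.mk J a = ψ (φ a) := (DFunLike.congr_fun hψφ a).symm
    _ = aeval b p := by rw [ha, hψ]
    _ = 0 := varPowIdeal_le_ker_aeval hb hp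

lemma limitClosure_coord_le (hS : Disjoint (S : Set (Aring K)) (mA K)) (n : ℕ) :
    limitClosure (M := R) (fun i : Fin 3 => coord K R i.succ ^ (n + 1)) ≤
      catalanIdeal (coord K R) n := by
  refine limitClosure_pow_le fun m a ha => ?_
  rw [Ideal.smul_eq_mul, Ideal.mul_top, smul_eq_mul] at ha
  set N := n + 1 + m
  let b : Fin 3 → MvPolynomial (Fin 3) K ⧸ varPowIdeal (Fin 3) K N :=
    fun i => Ideal.Quotient.mk _ (X i)
  have hb (i : Fin 3) : b i ^ N = 0 := mk_X_pow_eq_zero N i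
  obtain ⟨φ, hφ⟩ := exists_algHom_coord_eq (R := R) S hS (catalanPoint_rel (hb 1))
    (isNilpotent_catalanPoint (fun i => ⟨N, hb i⟩) N)
  have hφsucc (i : Fin 3) : φ (coord K R i.succ) = b i := hφ i.succ
  have hker : Ideal.span (Set.range fun i : Fin 3 => coord K R i.succ ^ N) ≤ RingHom.ker φ := by
    rw [Ideal.span_le]
    rintro _ ⟨i, rfl⟩
    simp [hφsucc, hb]
  obtain ⟨p, hp⟩ := Ideal.Quotient.mk_surjective (φ a)
  refine mem_catalanIdeal_of_algHom_eq_mk S (by omega) hφ hp.symm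
    (mem_varPowIdeal_of_prod_pow_mul_mem (m := m) ?_)
  rw [← Ideal.Quotient.eq_zero_iff_mem]
  calc Ideal.Quotient.mk _ ((∏ i, X i) ^ m * p)
      = φ ((∏ i : Fin 3, coord K R i.succ) ^ m * a) := by simp [hφsucc, hp, b]
    _ = 0 := hker ha

end LimitClosureCoord

/-- The case `S = ⊥` is the statement for `A` itself. -/
theorem limitClosure_catalan_example_general {K R : Type*} [Field K] [CommRing R]
    [Algebra (Aring K) R] [Algebra K R] [IsScalarTower K (Aring K) R] (S : Submonoid (Aring K))
    [IsLocalization S R] (hS : Disjoint (S : Set (Aring K)) (mA K)) (n : ℕ) :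
    limitClosure (M := R) ![coord K R 1 ^ (n + 1), coord K R 2 ^ (n + 1), coord K R 3 ^ (n + 1)] =
      catalanIdeal (coord K R) n := by
  have hcons : ![coord K R 1 ^ (n + 1), coord K R 2 ^ (n + 1), coord K R 3 ^ (n + 1)] =
      fun i : Fin 3 => coord K R i.succ ^ (n + 1) := by
    ext i
    fin_cases i <;> rfl
  rw [hcons]
  exact le_antisymm (limitClosure_coord_le S hS n) (catalanIdeal_le_limitClosure (coord_rel K R) n)

/-- Let `K` be a field of characteristic `0`, `A = K[X, Y, U, V]/(XY − UX² − VY²)` with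
`x, y, u, v` the images of the variables, and `R = A_m` the localization of `A` at
`m = (x, y, u, v)`.  Then for all `n ≥ 1`,
`(yⁿ, uⁿ, vⁿ)^lim = (yⁿ, uⁿ, vⁿ, x − yv·Σ_{i=0}^{n-2} Cᵢ(uv)ⁱ)` in `R`, where `Cᵢ` is the
`i`-th Catalan number. -/
theorem limitClosure_catalan_example
    (K : Type*) [Field K] [CharZero K] [hm : (mA K).IsPrime] :
    ∀ n : ℕ, 1 ≤ n →
      limitClosure (M := Localization.AtPrime (mA K))
          ![algebraMap (Aring K) (Localization.AtPrime (mA K)) (xA K 1) ^ n,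
            algebraMap (Aring K) (Localization.AtPrime (mA K)) (xA K 2) ^ n,
            algebraMap (Aring K) (Localization.AtPrime (mA K)) (xA K 3) ^ n] =
        Ideal.span
          {algebraMap (Aring K) (Localization.AtPrime (mA K)) (xA K 1) ^ n,
           algebraMap (Aring K) (Localization.AtPrime (mA K)) (xA K 2) ^ n,
           algebraMap (Aring K) (Localization.AtPrime (mA K)) (xA K 3) ^ n,
           algebraMap (Aring K) (Localization.AtPrime (mA K)) (xA K 0) -
             algebraMap (Aring K) (Localization.AtPrime (mA K)) (xA K 1) *
               algebraMap (Aring K) (Localization.AtPrime (mA K)) (xA K 3) *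
               ∑ i ∈ Finset.range (n - 1),
                 (catalan i : Localization.AtPrime (mA K)) *
                   (algebraMap (Aring K) (Localization.AtPrime (mA K)) (xA K 2) *
                     algebraMap (Aring K) (Localization.AtPrime (mA K)) (xA K 3)) ^ i} := by
  intro n hn
  obtain ⟨n, rfl⟩ := Nat.exists_eq_add_of_le' hn
  exact limitClosure_catalan_example_general (mA K).primeCompl disjoint_compl_left n
end
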